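/- arXiv:1805.00260 — 6 statements merged into one kernel-verified Lean document; each statement's English description precedes it below -/
import Mathlib

section
/- Let G(m,n) denote the Cartesian product of a path on m vertices and a path on n vertices. For all integers m,n ≥ 2: š(G(m,n)) = 1 if m = n = 2; š(G(m,n)) = 2 if min{m,n} = 2 and max{m,n} ≥ 3; š(G(m,n)) = 3 if m,n ≥ 3 and m·n is even; and š(G(m,n)) = 5 if m,n ≥ 3 and m·n is odd. -/
open SimpleGraph Finset

/-- A proper edge coloring of `G` with colors in `ℕ`: distinct edges of `G`
sharing an endpoint receive distinct colors. -/
def IsProperEdgeColoring {V : Type*} (G : SimpleGraph V) (c : Sym2 V → ℕ) : Prop :=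
  ∀ e₁ ∈ G.edgeSet, ∀ e₂ ∈ G.edgeSet, e₁ ≠ e₂ → (∃ v, v ∈ e₁ ∧ v ∈ e₂) → c e₁ ≠ c e₂

/-- The palette of a vertex `v`: the set of colors appearing on edges of `G` incident with `v`. -/
def palette {V : Type*} (G : SimpleGraph V) (c : Sym2 V → ℕ) (v : V) : Set ℕ :=
  {n | ∃ e ∈ G.edgeSet, v ∈ e ∧ c e = n}

/-- The palette index of `G`: the minimum number of distinct palettes occurring in a
proper edge coloring of `G`. -/
noncomputable def paletteIndex {V : Type*} (G : SimpleGraph V) : ℕ :=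
  sInf {k | ∃ c : Sym2 V → ℕ, IsProperEdgeColoring G c ∧ (Set.range (palette G c)).ncard = k}

/-! ### Upper bound -/

def gcol {m n : ℕ} (h v : ℕ → ℕ → ℕ) : Sym2 (Fin m × Fin n) → ℕ :=
  Sym2.lift ⟨fun a b => if a.1 = b.1 then h (min a.1.1 b.1.1) (min a.2.1 b.2.1)
    else v (min a.1.1 b.1.1) (min a.2.1 b.2.1), by
      intro a b
      simp only [min_comm, eq_comm]⟩

def gpal (m n : ℕ) (h v : ℕ → ℕ → ℕ) (i j : ℕ) : Finset ℕ :=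
  (if j + 1 < n then {h i j} else ∅) ∪ (if 0 < j then {h i (j-1)} else ∅) ∪
  ((if i + 1 < m then {v i j} else ∅) ∪ (if 0 < i then {v (i-1) j} else ∅))

def GoodCol (m n : ℕ) (h v : ℕ → ℕ → ℕ) (T : Finset (Finset ℕ)) : Prop :=
  ∀ i j, i < m → j < n →
    ((j + 1 < n → 0 < j → h i j ≠ h i (j-1)) ∧
     (j + 1 < n → i + 1 < m → h i j ≠ v i j) ∧
     (j + 1 < n → 0 < i → h i j ≠ v (i-1) j) ∧
     (0 < j → i + 1 < m → h i (j-1) ≠ v i j) ∧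
     (0 < j → 0 < i → h i (j-1) ≠ v (i-1) j) ∧
     (i + 1 < m → 0 < i → v i j ≠ v (i-1) j)) ∧ gpal m n h v i j ∈ T

lemma GoodCol.swap {m n h v T} (H : GoodCol m n h v T) :
    GoodCol n m (fun i j => v j i) (fun i j => h j i) T := by
  intro i j hi hj
  obtain ⟨⟨h1, h2, h3, h4, h5, h6⟩, h7⟩ := H j i hj hi
  refine ⟨⟨h6, fun a b => (h2 b a).symm, fun a b => (h4 b a).symm, fun a b => (h3 b a).symm,
    fun a b => (h5 b a).symm, h1⟩, ?_⟩
  rw [gpal, Finset.union_comm] at h7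
  exact h7

lemma gadj {m n : ℕ} (h v : ℕ → ℕ → ℕ) (a b : Fin m × Fin n)
    (H : ((pathGraph m) □ (pathGraph n)).Adj a b) :
    (b.1.1 = a.1.1 ∧ b.2.1 = a.2.1 + 1 ∧ a.2.1 + 1 < n ∧ gcol h v s(a,b) = h a.1 a.2) ∨
    (b.1.1 = a.1.1 ∧ b.2.1 = a.2.1 - 1 ∧ 0 < a.2.1 ∧ gcol h v s(a,b) = h a.1 (a.2 - 1)) ∨
    (b.1.1 = a.1.1 + 1 ∧ b.2.1 = a.2.1 ∧ a.1.1 + 1 < m ∧ gcol h v s(a,b) = v a.1 a.2) ∨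
    (b.1.1 = a.1.1 - 1 ∧ b.2.1 = a.2.1 ∧ 0 < a.1.1 ∧ gcol h v s(a,b) = v (a.1 - 1) a.2) := by
  obtain ⟨⟨a1, ha1⟩, ⟨a2, ha2⟩⟩ := a
  obtain ⟨⟨b1, hb1⟩, ⟨b2, hb2⟩⟩ := b
  simp only [boxProd_adj, pathGraph_adj, Fin.mk.injEq] at H
  simp only [gcol, Sym2.lift_mk, Fin.mk.injEq]
  rcases H with ⟨H | H, rfl⟩ | ⟨H | H, rfl⟩
  · subst H
    right; right; left
    simp [hb1]
  · subst H
    right; right; right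
    simp
  · subst H
    left
    simp [hb2]
  · subst H
    right; left
    simp

lemma palette_gcol {m n : ℕ} (h v : ℕ → ℕ → ℕ) (a : Fin m × Fin n) :
    palette ((pathGraph m) □ (pathGraph n)) (gcol h v) a = gpal m n h v a.1 a.2 := by
  ext x
  simp only [palette, Set.mem_ofPred_eq, gpal, Finset.coe_union, Set.mem_union, Finset.mem_coe]
  have key : ∀ b, (((pathGraph m) □ (pathGraph n)).Adj a b ∧ gcol h v s(a,b) = x) →
    ∃ e ∈ ((pathGraph m) □ (pathGraph n)).edgeSet, a ∈ e ∧ gcol h v e = x := by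
    intro b hb
    exact ⟨s(a,b), hb.1, by simp, hb.2⟩
  constructor
  · rintro ⟨e, he, hae, hx⟩
    obtain ⟨b, rfl⟩ := Sym2.mem_iff_exists.1 hae
    have H := gadj h v a b he
    rcases H with H | H | H | H
    · left; left; rw [if_pos H.2.2.1]; simp [← hx, H.2.2.2]
    · left; right; rw [if_pos H.2.2.1]; simp [← hx, H.2.2.2]
    · right; left; rw [if_pos H.2.2.1]; simp [← hx, H.2.2.2]
    · right; right; rw [if_pos H.2.2.1]; simp [← hx, H.2.2.2]
  · obtain ⟨⟨a1, ha1⟩, ⟨a2, ha2⟩⟩ := a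
    dsimp only
    rintro ((H | H) | (H | H))
    · split_ifs at H with hc
      · apply key (⟨a1, ha1⟩, ⟨a2+1, hc⟩)
        simp [boxProd_adj, pathGraph_adj, gcol] at H ⊢
        exact H.symm
      · simp at H
    · split_ifs at H with hc
      · apply key (⟨a1, ha1⟩, ⟨a2-1, by omega⟩)
        simp [boxProd_adj, pathGraph_adj, gcol] at H ⊢
        exact ⟨by omega, H.symm⟩
      · simp at H
    · split_ifs at H with hc
      · apply key (⟨a1+1, hc⟩, ⟨a2, ha2⟩)
        simp [boxProd_adj, pathGraph_adj, gcol] at H ⊢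
        exact H.symm
      · simp at H
    · split_ifs at H with hc
      · apply key (⟨a1-1, by omega⟩, ⟨a2, ha2⟩)
        simp [boxProd_adj, pathGraph_adj, gcol] at H ⊢
        refine ⟨by omega, ?_⟩
        rw [if_neg (by omega)]
        exact H.symm
      · simp at H

lemma GoodCol.proper {m n h v T} (H : GoodCol m n h v T) :
    IsProperEdgeColoring ((pathGraph m) □ (pathGraph n)) (gcol h v) := by
  rintro e₁ he₁ e₂ he₂ hne ⟨a, ha1, ha2⟩
  obtain ⟨b, rfl⟩ := Sym2.mem_iff_exists.1 ha1
  obtain ⟨b', rfl⟩ := Sym2.mem_iff_exists.1 ha2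
  have hb : b ≠ b' := fun hh => hne (by rw [hh])
  have hb2 : ¬ (b.1.1 = b'.1.1 ∧ b.2.1 = b'.2.1) := fun hh =>
    hb (Prod.ext (Fin.ext hh.1) (Fin.ext hh.2))
  obtain ⟨⟨h1, h2, h3, h4, h5, h6⟩, h7⟩ := H a.1 a.2 a.1.2 a.2.2
  rcases gadj h v a b he₁ with ⟨p1, p2, p3, p4⟩ | ⟨p1, p2, p3, p4⟩ | ⟨p1, p2, p3, p4⟩ | ⟨p1, p2, p3, p4⟩ <;>
  rcases gadj h v a b' he₂ with ⟨q1, q2, q3, q4⟩ | ⟨q1, q2, q3, q4⟩ | ⟨q1, q2, q3, q4⟩ | ⟨q1, q2, q3, q4⟩ <;>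
  rw [p4, q4]
  · exact absurd ⟨by omega, by omega⟩ hb2
  · exact h1 p3 q3
  · exact h2 p3 q3
  · exact h3 p3 q3
  · exact (h1 q3 p3).symm
  · exact absurd ⟨by omega, by omega⟩ hb2
  · exact h4 p3 q3
  · exact h5 p3 q3
  · exact (h2 q3 p3).symm
  · exact (h4 q3 p3).symm
  · exact absurd ⟨by omega, by omega⟩ hb2
  · exact h6 p3 q3
  · exact (h3 q3 p3).symm
  · exact (h5 q3 p3).symm
  · exact (h6 q3 p3).symm
  · exact absurd ⟨by omega, by omega⟩ hb2

lemma GoodCol.le {m n h v T} (H : GoodCol m n h v T) :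
    paletteIndex ((pathGraph m) □ (pathGraph n)) ≤ T.card := by
  have h0 : paletteIndex ((pathGraph m) □ (pathGraph n)) ≤
      (Set.range (palette ((pathGraph m) □ (pathGraph n)) (gcol h v))).ncard :=
    Nat.sInf_le ⟨gcol h v, H.proper, rfl⟩
  refine h0.trans ?_
  have : Set.range (palette ((pathGraph m) □ (pathGraph n)) (gcol h v)) ⊆
      ((T.image (fun s : Finset ℕ => (s : Set ℕ)) : Finset (Set ℕ)) : Set (Set ℕ)) := by
    rintro _ ⟨a, rfl⟩
    rw [palette_gcol]
    simpa using (H a.1 a.2 a.1.2 a.2.2).2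
  calc _ ≤ _ := Set.ncard_le_ncard this (Finset.finite_toSet _)
    _ = _ := Set.ncard_coe_finset _
    _ ≤ _ := Finset.card_image_le

def hE (_ j : ℕ) : ℕ := if j % 2 = 0 then 1 else 2
def vE (n i j : ℕ) : ℕ :=
  if i % 2 = 0 then (if j = 0 then 2 else if j + 1 = n then (if n % 2 = 0 then 2 else 1) else 3)
  else (if j = 0 ∨ j + 1 = n then 3 else 4)

def TE (m n : ℕ) : Finset (Finset ℕ) :=
  if m = 2 ∧ n = 2 then {{1,2}} else if min m n = 2 then {{1,2},{1,2,3}}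
  else {{1,2},{1,2,3},{1,2,3,4}}

lemma Finset.mem_of_eq_of_mem {a b : Finset ℕ} {T : Finset (Finset ℕ)} (h : a = b) (hb : b ∈ T) :
    a ∈ T := h ▸ hb

set_option maxHeartbeats 4000000 in
lemma goodE (m n : ℕ) (hm : 2 ≤ m) (hn : 2 ≤ n) (he : m % 2 = 0) :
    GoodCol m n hE (vE n) (TE m n) := by
  intro i j hi hj
  have hT1 : ({1,2} : Finset ℕ) ∈ TE m n := by
    unfold TE; split_ifs <;> decide
  have hT2 : 2 < m ∨ 2 < n → ({1,2,3} : Finset ℕ) ∈ TE m n := by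
    intro h; unfold TE; rw [if_neg (by omega)]; split_ifs <;> decide
  have hT3 : 2 < m ∧ 2 < n → ({1,2,3,4} : Finset ℕ) ∈ TE m n := by
    intro h; unfold TE; rw [if_neg (by omega), if_neg (by omega)]; decide
  have hI : (i = 0) ∨ (0 < i ∧ i % 2 = 0) ∨ (i % 2 = 1 ∧ i + 1 < m) ∨ (i % 2 = 1 ∧ i + 1 = m) := by
    omega
  have hJ : (j = 0) ∨ (0 < j ∧ j + 1 < n ∧ j % 2 = 0) ∨ (j + 1 < n ∧ j % 2 = 1) ∨
    (0 < j ∧ j + 1 = n ∧ j % 2 = 0) ∨ (j + 1 = n ∧ j % 2 = 1) := by omega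
  unfold gpal hE vE
  rcases hI with hI | hI | hI | hI <;> rcases hJ with hJ | hJ | hJ | hJ | hJ <;>
  simp (disch := omega) only [if_pos, if_neg] <;>
  refine ⟨⟨?_, ?_, ?_, ?_, ?_, ?_⟩, ?_⟩ <;>
  intros <;>
  first
  | decide
  | exact Finset.mem_of_eq_of_mem (by decide) hT1
  | exact Finset.mem_of_eq_of_mem (by decide) (hT2 (by omega))
  | exact Finset.mem_of_eq_of_mem (by decide) (hT3 (by omega))
  | omega

lemma TE_card (m n : ℕ) : (TE m n).card =
    if m = 2 ∧ n = 2 then 1 else if min m n = 2 then 2 else 3 := by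
  unfold TE; split_ifs <;> decide

def hO (m n i j : ℕ) : ℕ :=
  if i + 3 < m then (if j % 2 = 0 then 1 else 2)
  else if i + 3 = m then (if j + 2 = n then 1 else if j % 2 = 0 then 2 else 3)
  else if i + 2 = m then (if j + 2 = n then 1 else if j % 2 = 0 then 4 else 3)
  else (if j % 2 = 0 then 1 else 3)

def vO (m n i j : ℕ) : ℕ :=
  if i + 3 < m then
    if i % 2 = 0 then (if j = 0 then 2 else if j + 1 = n then 1 else 3)
    else (if j = 0 ∨ j + 1 = n then 3 else 4)
  else if i + 3 = m then (if j + 2 = n then 3 else if j + 1 = n then 2 else 1)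
  else (if j + 1 = n then 4 else 2)

def TO : Finset (Finset ℕ) := {{1,2},{1,2,3},{1,2,3,4},{3,4},{1,2,4}}

set_option maxHeartbeats 4000000 in
lemma goodO (m n : ℕ) (hm : 3 ≤ m) (hn : 3 ≤ n) (he : m % 2 = 1) (ho : n % 2 = 1) :
    GoodCol m n (hO m n) (vO m n) TO := by
  intro i j hi hj
  have hI : (i = 0 ∧ i + 3 < m) ∨ (0 < i ∧ i + 3 < m ∧ i % 2 = 0) ∨ (i % 2 = 1 ∧ i + 3 < m) ∨
      (i = 0 ∧ i + 3 = m) ∨ (0 < i ∧ i + 3 = m) ∨ i + 2 = m ∨ i + 1 = m := by omega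
  have hJ : (j = 0) ∨ (0 < j ∧ j + 1 < n ∧ j % 2 = 0) ∨ (j + 2 < n ∧ j % 2 = 1) ∨
      (j + 2 = n) ∨ (j + 1 = n) := by omega
  unfold gpal hO vO
  rcases hI with hI | hI | hI | hI | hI | hI | hI <;> rcases hJ with hJ | hJ | hJ | hJ | hJ <;>
  simp (disch := omega) only [if_pos, if_neg] <;>
  refine ⟨⟨?_, ?_, ?_, ?_, ?_, ?_⟩, ?_⟩ <;> (intros; first | decide | omega)

/-! ### Lower bound -/

lemma le_paletteIndex {m n h v T} (H : GoodCol m n h v T) (k : ℕ)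
    (hk : ∀ c, IsProperEdgeColoring ((pathGraph m) □ (pathGraph n)) c →
      k ≤ (Set.range (palette ((pathGraph m) □ (pathGraph n)) c)).ncard) :
    k ≤ paletteIndex ((pathGraph m) □ (pathGraph n)) := by
  refine le_csInf ⟨_, ⟨gcol h v, H.proper, rfl⟩⟩ ?_
  rintro _ ⟨c, hc, rfl⟩
  exact hk c hc

open Classical in
noncomputable def fpal {V : Type*} [Fintype V] (G : SimpleGraph V) (c : Sym2 V → ℕ) (v : V) :
    Finset ℕ := (G.neighborFinset v).image (fun w => c s(v,w))

lemma mem_fpal {V : Type*} [Fintype V] (G : SimpleGraph V) (c : Sym2 V → ℕ) (v : V) (x : ℕ) :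
    x ∈ fpal G c v ↔ ∃ w, G.Adj v w ∧ c s(v,w) = x := by
  simp [fpal]

lemma coe_fpal {V : Type*} [Fintype V] (G : SimpleGraph V) (c : Sym2 V → ℕ) (v : V) :
    (fpal G c v : Set ℕ) = palette G c v := by
  ext x
  rw [Finset.mem_coe, mem_fpal]
  constructor
  · rintro ⟨w, hw, rfl⟩
    exact ⟨s(v,w), hw, by simp, rfl⟩
  · rintro ⟨e, he, hv, rfl⟩
    obtain ⟨b, rfl⟩ := Sym2.mem_iff_exists.1 hv
    exact ⟨b, he, rfl⟩

lemma proper_inj {V : Type*} {G : SimpleGraph V} {c : Sym2 V → ℕ}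
    (hc : IsProperEdgeColoring G c) {v a b : V} (ha : G.Adj v a) (hb : G.Adj v b)
    (h : c s(v,a) = c s(v,b)) : a = b := by
  by_contra hne
  refine hc s(v,a) ha s(v,b) hb ?_ ⟨v, by simp, by simp⟩ h
  intro h2
  exact hne (Sym2.congr_right.1 h2)

open Classical in
lemma card_fpal {V : Type*} [Fintype V] {G : SimpleGraph V} {c : Sym2 V → ℕ}
    (hc : IsProperEdgeColoring G c) (v : V) : (fpal G c v).card = G.degree v := by
  rw [fpal, Finset.card_image_of_injOn, card_neighborFinset_eq_degree]
  intro a ha b hb h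
  simp only [Finset.mem_coe, mem_neighborFinset] at ha hb
  exact proper_inj hc ha hb h

lemma ncard_range {V : Type*} [Fintype V] (G : SimpleGraph V) (c : Sym2 V → ℕ) :
    (Set.range (palette G c)).ncard = (univ.image (fpal G c)).card := by
  have : Set.range (palette G c) =
      (fun s : Finset ℕ => (s : Set ℕ)) '' ((univ.image (fpal G c) : Finset (Finset ℕ)) : Set (Finset ℕ)) := by
    ext s
    simp [coe_fpal]
  rw [this, Set.ncard_image_of_injective _ Finset.coe_injective, Set.ncard_coe_finset]

lemma color_sum {V : Type*} [Fintype V] {G : SimpleGraph V} {c : Sym2 V → ℕ}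
    (hc : IsProperEdgeColoring G c) (w : V → ℤ) (hw : ∀ u v, G.Adj u v → w u + w v = 0)
    (x : ℕ) : ∑ v with x ∈ fpal G c v, w v = 0 := by
  have H : ∀ v ∈ univ.filter (fun v => x ∈ fpal G c v), ∃ u, G.Adj v u ∧ c s(v,u) = x := by
    intro v hv
    rw [← mem_fpal]
    simpa using hv
  choose g hg hgx using H
  refine Finset.sum_involution g (fun v hv => hw _ _ (hg v hv)) (fun v hv _ h => ?_) (fun v hv => ?_) (fun v hv => ?_)
  · exact (hg v hv).ne h.symm
  · simp only [mem_filter, mem_univ, true_and, mem_fpal]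
    exact ⟨v, (hg v hv).symm, by rw [Sym2.eq_swap]; exact hgx v hv⟩
  · apply proper_inj hc (hg _ _) (hg v hv).symm
    rw [hgx, Sym2.eq_swap, hgx]

open Classical in
lemma path_degree (m : ℕ) (hm : 2 ≤ m) (i : Fin m) :
    (pathGraph m).degree i = if i.1 = 0 ∨ i.1 + 1 = m then 1 else 2 := by
  obtain ⟨i, hi⟩ := i
  dsimp only
  rw [← card_neighborFinset_eq_degree]
  split_ifs with h
  · rw [Finset.card_eq_one]
    rcases h with h | h
    · refine ⟨⟨1, by omega⟩, ?_⟩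
      ext ⟨j, hj⟩
      simp only [mem_neighborFinset, pathGraph_adj, Finset.mem_singleton, Fin.mk.injEq]
      omega
    · refine ⟨⟨i-1, by omega⟩, ?_⟩
      ext ⟨j, hj⟩
      simp only [mem_neighborFinset, pathGraph_adj, Finset.mem_singleton, Fin.mk.injEq]
      omega
  · rw [Finset.card_eq_two]
    refine ⟨⟨i-1, by omega⟩, ⟨i+1, by omega⟩, ?_, ?_⟩
    · simp only [ne_eq, Fin.mk.injEq]; omega
    · ext ⟨j, hj⟩
      simp only [mem_neighborFinset, pathGraph_adj, Finset.mem_singleton, Finset.mem_insert, Fin.mk.injEq]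
      omega

def bdry {m : ℕ} (i : Fin m) : Prop := i.1 = 0 ∨ i.1 + 1 = m

instance {m : ℕ} : DecidablePred (bdry (m := m)) := fun i => by unfold bdry; infer_instance

lemma card_fpal_grid {m n : ℕ} (hm : 2 ≤ m) (hn : 2 ≤ n) {c}
    (hc : IsProperEdgeColoring ((pathGraph m) □ (pathGraph n)) c) (a : Fin m × Fin n) :
    (fpal ((pathGraph m) □ (pathGraph n)) c a).card = (if bdry a.1 then 1 else 2) + (if bdry a.2 then 1 else 2) := by
  classical
  rw [card_fpal hc]
  have := degree_boxProd (G := pathGraph m) (H := pathGraph n) a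
  rw [path_degree m hm, path_degree n hn] at this
  unfold bdry
  convert this

lemma lower_easy (m n : ℕ) (hm : 2 ≤ m) (hn : 2 ≤ n) {c}
    (hc : IsProperEdgeColoring ((pathGraph m) □ (pathGraph n)) c) :
    (if m = 2 ∧ n = 2 then 1 else if min m n = 2 then 2 else 3) ≤
      (Set.range (palette ((pathGraph m) □ (pathGraph n)) c)).ncard := by
  rw [ncard_range]
  refine le_trans ?_ (Finset.card_image_le (f := Finset.card))
  have key : ∀ a : Fin m × Fin n, (if bdry a.1 then 1 else 2) + (if bdry a.2 then 1 else 2) ∈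
      (univ.image (fpal ((pathGraph m) □ (pathGraph n)) c)).image Finset.card := by
    intro a
    rw [← card_fpal_grid hm hn hc]
    exact Finset.mem_image_of_mem _ (Finset.mem_image_of_mem _ (mem_univ _))
  have k2 := key (⟨0, by omega⟩, ⟨0, by omega⟩)
  have b0m : bdry (⟨0, by omega⟩ : Fin m) := Or.inl rfl
  have b0n : bdry (⟨0, by omega⟩ : Fin n) := Or.inl rfl
  have b1m (h : 3 ≤ m) : ¬ bdry (⟨1, by omega⟩ : Fin m) := by
    rintro (h' | h') <;> dsimp only at h' <;> omega
  have b1n (h : 3 ≤ n) : ¬ bdry (⟨1, by omega⟩ : Fin n) := by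
    rintro (h' | h') <;> dsimp only at h' <;> omega
  rw [if_pos b0m, if_pos b0n] at k2
  split_ifs with h1 h2
  · exact Finset.card_le_card (s := {2}) (by simpa using k2)
  · have k3 : 3 ∈ (univ.image (fpal ((pathGraph m) □ (pathGraph n)) c)).image Finset.card := by
      rcases (by omega : 3 ≤ m ∨ 3 ≤ n) with h | h
      · have := key (⟨1, by omega⟩, ⟨0, by omega⟩)
        rwa [if_neg (b1m h), if_pos b0n] at this
      · have := key (⟨0, by omega⟩, ⟨1, by omega⟩)
        rwa [if_pos b0m, if_neg (b1n h)] at this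
    refine Finset.card_le_card (s := {2, 3}) ?_
    intro x hx
    simp only [Finset.mem_insert, Finset.mem_singleton] at hx
    rcases hx with rfl | rfl <;> assumption
  · have k3 := key (⟨1, by omega⟩, ⟨0, by omega⟩)
    rw [if_neg (b1m (by omega)), if_pos b0n] at k3
    have k4 := key (⟨1, by omega⟩, ⟨1, by omega⟩)
    rw [if_neg (b1m (by omega)), if_neg (b1n (by omega))] at k4
    refine Finset.card_le_card (s := {2, 3, 4}) ?_
    intro x hx
    simp only [Finset.mem_insert, Finset.mem_singleton] at hx
    rcases hx with rfl | rfl | rfl <;> assumption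

lemma abs_lower (K2 K3 K4 : Finset (Finset ℕ)) (E : Finset ℕ → ℤ)
    (c2 : ∀ P ∈ K2, P.card = 2) (c3 : ∀ P ∈ K3, P.card = 3) (c4 : ∀ P ∈ K4, P.card = 4)
    (s2 : ∑ P ∈ K2, E P = 4) (s3 : ∑ P ∈ K3, E P = -4) (s4 : ∑ P ∈ K4, E P = 1)
    (n2 : ∀ P ∈ K2, 0 ≤ E P)
    (hx : ∀ x : ℕ, (∑ P ∈ K2, if x ∈ P then E P else 0) + (∑ P ∈ K3, if x ∈ P then E P else 0) +
      (∑ P ∈ K4, if x ∈ P then E P else 0) = 0) : 5 ≤ K2.card + K3.card + K4.card := by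
  by_contra hlt
  have p2 : 0 < K2.card := by
    rw [Finset.card_pos]; by_contra h; rw [Finset.not_nonempty_iff_eq_empty] at h; simp [h] at s2
  have p3 : 0 < K3.card := by
    rw [Finset.card_pos]; by_contra h; rw [Finset.not_nonempty_iff_eq_empty] at h; simp [h] at s3
  have p4 : 0 < K4.card := by
    rw [Finset.card_pos]; by_contra h; rw [Finset.not_nonempty_iff_eq_empty] at h; simp [h] at s4
  rcases (by omega : K4.card = 1 ∨ (K4.card = 2 ∧ K2.card = 1 ∧ K3.card = 1)) with h4 | ⟨h4, h2, h3⟩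
  · obtain ⟨P, rfl⟩ := Finset.card_eq_one.1 h4
    simp only [Finset.sum_singleton] at s4 hx
    have cP := c4 P (by simp)
    by_cases h3 : K3.card = 1
    · obtain ⟨R, rfl⟩ := Finset.card_eq_one.1 h3
      have cR := c3 R (by simp)
      have : P ⊆ R := by
        intro x hxP
        by_contra hxR
        have := hx x
        simp only [Finset.sum_singleton, hxR, hxP, if_true, if_false, s4] at this
        have h0 : 0 ≤ ∑ P ∈ K2, if x ∈ P then E P else 0 :=
          Finset.sum_nonneg fun Q hQ => by split_ifs; exacts [n2 Q hQ, le_rfl]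
        omega
      have := Finset.card_le_card this
      omega
    · have h3' : K3.card = 2 := by rw [h4] at hlt; omega
      have h2 : K2.card = 1 := by rw [h4] at hlt; omega
      obtain ⟨Q, rfl⟩ := Finset.card_eq_one.1 h2
      obtain ⟨R, S, hRS, rfl⟩ := Finset.card_eq_two.1 h3'
      have cR := c3 R (by simp)
      have cS := c3 S (by simp)
      have cQ := c2 Q (by simp)
      simp only [Finset.sum_singleton, Finset.sum_pair hRS] at s2 s3 hx
      have e1 : ∃ x ∈ P, x ∉ Q := by
        by_contra! hh
        have := Finset.card_le_card (s := P) (t := Q) hh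
        omega
      have e2 : ∃ x ∈ P, x ∉ R := by
        by_contra! hh
        have := Finset.card_le_card (s := P) (t := R) hh
        omega
      have e3 : ∃ x ∈ P, x ∉ S := by
        by_contra! hh
        have := Finset.card_le_card (s := P) (t := S) hh
        omega
      obtain ⟨x, hxP, hxQ⟩ := e1
      obtain ⟨y, hyP, hyR⟩ := e2
      obtain ⟨z, hzP, hzS⟩ := e3
      have hx1 := hx x
      have hy1 := hx y
      have hz1 := hx z
      simp only [hxP, hxQ, hyP, hyR, hzP, hzS, if_true, if_false, s2, s4] at hx1 hy1 hz1
      split_ifs at hx1 hy1 hz1 <;> omega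
  · obtain ⟨Q, rfl⟩ := Finset.card_eq_one.1 h2
    obtain ⟨R, rfl⟩ := Finset.card_eq_one.1 h3
    obtain ⟨P, P', hPP, rfl⟩ := Finset.card_eq_two.1 h4
    simp only [Finset.sum_singleton, Finset.sum_pair hPP] at s2 s3 s4 hx
    have e1 : P.Nonempty := by rw [← Finset.card_pos, c4 P (by simp)]; norm_num
    have e2 : P'.Nonempty := by rw [← Finset.card_pos, c4 P' (by simp)]; norm_num
    obtain ⟨x, hxP⟩ := e1
    obtain ⟨y, hyP⟩ := e2
    have hx1 := hx x
    have hy1 := hx y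
    simp only [hxP, hyP, if_true, s2, s3] at hx1 hy1
    split_ifs at hx1 hy1 <;> omega

def sg {m : ℕ} (i : Fin m) : ℤ := if i.1 % 2 = 0 then 1 else -1

lemma sum_sg (m : ℕ) (hm : m % 2 = 1) : ∑ i : Fin m, sg i = 1 := by
  unfold sg
  rw [Fin.sum_univ_eq_sum_range (fun i => if i % 2 = 0 then (1:ℤ) else -1)]
  have : ∀ k, ∑ i ∈ range (2 * k + 1), (if i % 2 = 0 then (1:ℤ) else -1) = 1 := by
    intro k
    induction k with
    | zero => simp
    | succ k ih =>
      rw [show 2 * (k+1) + 1 = 2 * k + 1 + 1 + 1 by ring, sum_range_succ, sum_range_succ, ih,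
        if_neg (by omega), if_pos (by omega)]
      norm_num
  rw [show m = 2 * (m / 2) + 1 by omega]
  exact this _

lemma sum_sg_bdry (m : ℕ) (hm : m % 2 = 1) (h3 : 3 ≤ m) : ∑ i : Fin m with bdry i, sg i = 2 := by
  have : (univ.filter (fun i : Fin m => bdry i)) = {⟨0, by omega⟩, ⟨m-1, by omega⟩} := by
    ext i
    have := i.2
    rw [Finset.mem_filter]
    simp only [mem_univ, true_and, bdry, Finset.mem_insert, Finset.mem_singleton, Fin.ext_iff]
    omega
  rw [this, Finset.sum_pair (fun h => by have := congrArg Fin.val h; dsimp only at this; omega)]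
  have e1 : (m - 1) % 2 = 0 := by omega
  simp [sg, e1]

lemma sum_sg_int (m : ℕ) (hm : m % 2 = 1) (h3 : 3 ≤ m) : ∑ i : Fin m with ¬ bdry i, sg i = -1 := by
  have := Finset.sum_filter_add_sum_filter_not univ (fun i : Fin m => bdry i) sg
  rw [sum_sg_bdry m hm h3, sum_sg m hm] at this
  omega

lemma sum_prod {m n : ℕ} (p : Fin m → Prop) (q : Fin n → Prop) [DecidablePred p] [DecidablePred q] :
    ∑ a : Fin m × Fin n with p a.1 ∧ q a.2, sg a.1 * sg a.2 =
      (∑ i with p i, sg i) * (∑ j with q j, sg j) := by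
  rw [Finset.sum_mul_sum, ← Finset.sum_product']
  apply Finset.sum_congr _ (fun _ _ => rfl)
  ext a
  simp

lemma lower_odd (m n : ℕ) (hm : 3 ≤ m) (hn : 3 ≤ n) (om : m % 2 = 1) (on : n % 2 = 1) {c}
    (hc : IsProperEdgeColoring ((pathGraph m) □ (pathGraph n)) c) :
    5 ≤ (Set.range (palette ((pathGraph m) □ (pathGraph n)) c)).ncard := by
  rw [ncard_range]
  set p := fpal ((pathGraph m) □ (pathGraph n)) c with hp
  have hcard : ∀ a, (p a).card = (if bdry a.1 then 1 else 2) + (if bdry a.2 then 1 else 2) :=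
    card_fpal_grid (by omega) (by omega) hc
  let w : Fin m × Fin n → ℤ := fun a => sg a.1 * sg a.2
  let K : ℕ → Finset (Finset ℕ) := fun k => (univ.image p).filter (fun s => s.card = k)
  let E : Finset ℕ → ℤ := fun P => ∑ a with p a = P, w a
  have hK : ∀ k, ∑ P ∈ K k, E P = ∑ a with (p a).card = k, w a := by
    intro k
    simp only [E]
    rw [Finset.sum_fiberwise_eq_sum_filter]
    apply Finset.sum_congr _ (fun _ _ => rfl)
    ext a
    simp [K]
  have hw : ∀ x, ∑ a with x ∈ p a, w a = 0 := by
    intro x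
    apply color_sum hc w
    rintro ⟨⟨a1, ha1⟩, ⟨a2, ha2⟩⟩ ⟨⟨b1, hb1⟩, ⟨b2, hb2⟩⟩ H
    simp only [boxProd_adj, pathGraph_adj, Fin.mk.injEq] at H
    simp only [w, sg]
    split_ifs <;> omega
  have hKx : ∀ k x, (∑ P ∈ K k, if x ∈ P then E P else 0) =
      ∑ a with (p a).card = k ∧ x ∈ p a, w a := by
    intro k x
    rw [← Finset.sum_filter]
    simp only [E]
    rw [Finset.sum_fiberwise_eq_sum_filter]
    apply Finset.sum_congr _ (fun _ _ => rfl)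
    ext a
    simp [K]
  have h234 : ∀ a, (p a).card = 2 ∨ (p a).card = 3 ∨ (p a).card = 4 := by
    intro a; rw [hcard]; split_ifs <;> simp
  have f2 : ∀ a : Fin m × Fin n, (p a).card = 2 ↔ bdry a.1 ∧ bdry a.2 := by
    intro a; rw [hcard]; split_ifs <;> simp [*]
  have f4 : ∀ a : Fin m × Fin n, (p a).card = 4 ↔ ¬ bdry a.1 ∧ ¬ bdry a.2 := by
    intro a; rw [hcard]; split_ifs <;> simp [*]
  have f3 : ∀ a : Fin m × Fin n, (p a).card = 3 ↔ (bdry a.1 ∧ ¬ bdry a.2) ∨ (¬ bdry a.1 ∧ bdry a.2) := by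
    intro a; rw [hcard]; split_ifs <;> simp [*]
  have main : 5 ≤ (K 2).card + (K 3).card + (K 4).card := by
    apply abs_lower (K 2) (K 3) (K 4) E
    · intro P hP; exact (Finset.mem_filter.1 hP).2
    · intro P hP; exact (Finset.mem_filter.1 hP).2
    · intro P hP; exact (Finset.mem_filter.1 hP).2
    · rw [hK]
      simp only [f2, w]
      rw [sum_prod, sum_sg_bdry m om hm, sum_sg_bdry n on hn]; norm_num
    · rw [hK]
      simp only [f3, w]
      rw [Finset.filter_or, Finset.sum_union, sum_prod (fun i => bdry i) (fun j => ¬ bdry j), sum_prod (fun i => ¬ bdry i) (fun j => bdry j),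
        sum_sg_bdry m om hm, sum_sg_bdry n on hn, sum_sg_int m om hm, sum_sg_int n on hn]
      · norm_num
      · rw [Finset.disjoint_filter]
        tauto
    · rw [hK]
      simp only [f4, w]
      rw [sum_prod (fun i => ¬ bdry i) (fun j => ¬ bdry j), sum_sg_int m om hm, sum_sg_int n on hn]; norm_num
    · intro P hP
      have hP2 := (Finset.mem_filter.1 hP).2
      apply Finset.sum_nonneg
      rintro a ha
      have ha' : p a = P := by simpa using ha
      rw [← ha', f2] at hP2
      obtain ⟨⟨a1, ha1⟩, ⟨a2, ha2⟩⟩ := a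
      simp only [bdry] at hP2
      simp only [w, sg]
      rw [if_pos (by omega), if_pos (by omega)]; norm_num
    · intro x
      rw [hKx, hKx, hKx, ← hw x]
      simp only [Finset.sum_filter, ← Finset.sum_add_distrib]
      apply Finset.sum_congr rfl
      intro a _
      rcases h234 a with h | h | h <;> simp [h]
  refine main.trans ?_
  rw [← Finset.card_union_of_disjoint, ← Finset.card_union_of_disjoint]
  · apply Finset.card_le_card
    intro P
    simp only [K, Finset.mem_union, Finset.mem_filter]
    tauto
  · rw [Finset.disjoint_left]
    intro P
    simp only [K, Finset.mem_union, Finset.mem_filter]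
    omega
  · rw [Finset.disjoint_left]
    intro P
    simp only [K, Finset.mem_filter]
    omega

/-- The palette index of the grid `G(m,n)`, the Cartesian product of paths on `m`
and `n` vertices, for `m, n ≥ 2`. -/
theorem palette_index_grid (m n : ℕ) (hm : 2 ≤ m) (hn : 2 ≤ n) :
    paletteIndex ((pathGraph m) □ (pathGraph n)) =
      if m = 2 ∧ n = 2 then 1
      else if min m n = 2 then 2
      else if Even (m * n) then 3
      else 5 := by
  by_cases he : Even (m * n)
  · have hgoal : (if m = 2 ∧ n = 2 then 1 else if min m n = 2 then 2
        else if Even (m * n) then 3 else 5) =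
        (if m = 2 ∧ n = 2 then 1 else if min m n = 2 then 2 else 3) := by simp [he]
    rw [hgoal]
    have hG : ∃ h v, GoodCol m n h v (TE m n) := by
      rcases Nat.even_mul.1 he with h | h
      · exact ⟨_, _, goodE m n hm hn (Nat.even_iff.1 h)⟩
      · have := (goodE n m hn hm (Nat.even_iff.1 h)).swap
        have hT : TE n m = TE m n := by
          unfold TE; simp only [min_comm, and_comm]
        rw [hT] at this
        exact ⟨_, _, this⟩
    obtain ⟨h, v, hG⟩ := hG
    apply le_antisymm
    · rw [← TE_card]; exact hG.le
    · exact le_paletteIndex hG _ fun c hc => lower_easy m n hm hn hc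
  · have ho := he
    rw [Nat.not_even_iff_odd, Nat.odd_mul, Nat.odd_iff, Nat.odd_iff] at ho
    rw [if_neg (by omega), if_neg (by omega), if_neg he]
    have hG := goodO m n (by omega) (by omega) ho.1 ho.2
    apply le_antisymm
    · exact hG.le.trans (by decide)
    · exact le_paletteIndex hG _ fun c hc => lower_odd m n (by omega) (by omega) ho.1 ho.2 hc
end

section
/- If G is an (a,b)-biregular bipartite graph with a < b, then š(G) ≥ 1 + ⌈b/a⌉. -/
open SimpleGraph Finset

/-- `G` is `(a,b)`-biregular: bipartite with nonempty parts `(X, Y)` such that every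
vertex in `X` has degree `a` and every vertex in `Y` has degree `b`. -/
def IsBiregular {V : Type*} [Fintype V] (G : SimpleGraph V) [DecidableRel G.Adj] (a b : ℕ) : Prop :=
  ∃ X Y : Finset V, X.Nonempty ∧ Y.Nonempty ∧ Disjoint X Y ∧ (∀ v : V, v ∈ X ∨ v ∈ Y) ∧
    (∀ v w, G.Adj v w → (v ∈ X ∧ w ∈ Y) ∨ (v ∈ Y ∧ w ∈ X)) ∧
    (∀ v ∈ X, G.degree v = a) ∧ (∀ v ∈ Y, G.degree v = b)

theorem palette_ncard {V : Type*} [Fintype V] (G : SimpleGraph V) [DecidableRel G.Adj]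
    (c : Sym2 V → ℕ) (hc : IsProperEdgeColoring G c) (v : V) :
    (palette G c v).ncard = G.degree v ∧ (palette G c v).Finite := by
  have h : palette G c v = (fun w => c s(v, w)) '' (G.neighborFinset v : Set V) := by
    ext n
    constructor
    · rintro ⟨e, he, hv, rfl⟩
      obtain ⟨w, rfl⟩ := Sym2.mem_iff_exists.mp hv
      exact ⟨w, by simpa using he, rfl⟩
    · rintro ⟨w, hw, rfl⟩
      exact ⟨s(v, w), by simpa using hw, by simp, rfl⟩
  rw [h]
  refine ⟨?_, (Finset.finite_toSet _).image _⟩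
  rw [Set.ncard_image_of_injOn, Set.ncard_coe_finset, G.card_neighborFinset_eq_degree]
  intro w hw w' hw' hww
  by_contra hne
  refine hc s(v, w) (by simpa using hw) s(v, w') (by simpa using hw') ?_ ⟨v, by simp, by simp⟩ hww
  intro h'
  exact hne (Sym2.congr_right.mp h')

/-- If `G` is an `(a,b)`-biregular graph with `a < b`, then `š(G) ≥ 1 + ⌈b/a⌉`. -/
theorem palette_index_biregular_lower {V : Type*} [Fintype V]
    (G : SimpleGraph V) [DecidableRel G.Adj] {a b : ℕ}
    (hab : a < b) (hG : IsBiregular G a b) :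
    1 + (b + a - 1) / a ≤ paletteIndex G := by
  classical
  obtain ⟨X, Y, -, ⟨y, hy⟩, hXY, -, hadj, hX, hY⟩ := hG
  have key : ∀ w, G.Adj y w → w ∈ X := by
    intro w hw
    rcases hadj y w hw with h | h
    · exact absurd hy (Finset.disjoint_left.mp hXY h.1)
    · exact h.2
  have ha : 0 < a := by
    have hpos : 0 < G.degree y := by rw [hY y hy]; omega
    obtain ⟨w, hw⟩ := (G.degree_pos_iff_exists_adj y).mp hpos
    rw [← hX w (key w hw)]
    exact (G.degree_pos_iff_exists_adj w).mpr ⟨y, hw.symm⟩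
  unfold paletteIndex
  apply le_csInf
  · obtain ⟨f, hf⟩ := exists_injective_nat (Sym2 V)
    exact ⟨_, f, fun e₁ _ e₂ _ hne _ h => hne (hf h), rfl⟩
  rintro k ⟨c, hc, rfl⟩
  have hfin : (Set.range (palette G c)).Finite := Set.finite_range _
  let P : Finset (Set ℕ) := X.image (palette G c)
  have hcov : palette G c y ⊆ ⋃ s ∈ P, s := by
    rintro n ⟨e, he, hv, rfl⟩
    obtain ⟨w, rfl⟩ := Sym2.mem_iff_exists.mp hv
    have hw : w ∈ X := key w (by simpa using he)
    simp only [Set.mem_iUnion]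
    exact ⟨palette G c w, Finset.mem_image_of_mem _ hw, s(y, w), he, by simp, rfl⟩
  have hPs : ∀ s ∈ P, s.ncard = a ∧ s.Finite := by
    intro s hs
    obtain ⟨x, hx, rfl⟩ := Finset.mem_image.mp hs
    have := palette_ncard G c hc x
    rwa [hX x hx] at this
  have hb : b ≤ P.card * a := by
    rw [← hY y hy, ← (palette_ncard G c hc y).1]
    calc _ ≤ (⋃ s ∈ P, s).ncard :=
          Set.ncard_le_ncard hcov (P.finite_toSet.biUnion fun s hs => (hPs s hs).2)
      _ ≤ ∑ s ∈ P, s.ncard := P.set_ncard_biUnion_le _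
      _ = P.card * a := by rw [Finset.sum_congr rfl fun s hs => (hPs s hs).1]; simp
  have hnot : palette G c y ∉ P := by
    intro h
    have h1 := (hPs _ h).1
    rw [(palette_ncard G c hc y).1, hY y hy] at h1
    omega
  have hle : P.card + 1 ≤ (Set.range (palette G c)).ncard := by
    rw [← Finset.card_insert_of_notMem hnot, ← Set.ncard_coe_finset]
    apply Set.ncard_le_ncard _ hfin
    intro s hs
    simp only [P, Finset.coe_insert, Finset.coe_image, Set.mem_insert_iff, Set.mem_image] at hs
    rcases hs with rfl | ⟨x, -, rfl⟩ <;> exact ⟨_, rfl⟩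
  have hdiv : (b + a - 1) / a ≤ P.card := by
    apply Nat.le_of_lt_succ
    rw [Nat.div_lt_iff_lt_mul ha, Nat.succ_mul]
    omega
  omega
end

section
/- For all positive integers a < b, the complete bipartite graph K_{a,b} satisfies 1 + ⌈b/a⌉ ≤ š(K_{a,b}) ≤ 1 + b/gcd(a,b). -/
open SimpleGraph Finset

/-- the coloring on pairs -/
def hcol (g m x y : ℕ) : ℕ := ((x / g + y / g) % m) * g + (x + y) % g

theorem hcol_comm (g m x y : ℕ) : hcol g m x y = hcol g m y x := by
  unfold hcol; rw [add_comm (x / g), add_comm x]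

theorem hcol_inj {g m x y z : ℕ} (hg : 0 < g) (hy : y / g < m) (hz : z / g < m)
    (h : hcol g m x y = hcol g m x z) : y = z := by
  unfold hcol at h
  have h1 : (x + y) % g = (x + z) % g := by
    have := congrArg (· % g) h
    simpa [Nat.add_mod, Nat.mul_mod] using this
  have h2 : (x / g + y / g) % m = (x / g + z / g) % m := by
    rw [h1] at h
    exact Nat.eq_of_mul_eq_mul_right hg (Nat.add_right_cancel h)
  have h3 : y % g = z % g := Nat.ModEq.add_left_cancel' x h1
  have h4 : y / g % m = z / g % m := Nat.ModEq.add_left_cancel' (x / g) h2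
  rw [Nat.mod_eq_of_lt hy, Nat.mod_eq_of_lt hz] at h4
  rw [← Nat.div_add_mod y g, ← Nat.div_add_mod z g, h3, h4]

theorem hcol_lt {g m x y : ℕ} (hg : 0 < g) (hm : 0 < m) : hcol g m x y < m * g := by
  unfold hcol
  have h1 := Nat.mod_lt (x / g + y / g) hm
  have h2 := Nat.mod_lt (x + y) hg
  nlinarith

theorem palette_inl {a b : ℕ} (c : Sym2 (Fin a ⊕ Fin b) → ℕ) (i : Fin a) :
    palette (completeBipartiteGraph (Fin a) (Fin b)) c (Sum.inl i) =
      ((univ.image fun j : Fin b => c s(Sum.inl i, Sum.inr j) : Finset ℕ) : Set ℕ) := by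
  ext n
  simp only [palette, Set.mem_ofPred_eq, coe_image, coe_univ, Set.image_univ, Set.mem_range]
  constructor
  · rintro ⟨e, he, hv, rfl⟩
    obtain ⟨w, rfl⟩ := Sym2.mem_iff_exists.1 hv
    rcases w with w | w
    · simp at he
    · exact ⟨w, rfl⟩
  · rintro ⟨j, rfl⟩
    exact ⟨_, by simp, by simp, rfl⟩

theorem palette_inr {a b : ℕ} (c : Sym2 (Fin a ⊕ Fin b) → ℕ) (j : Fin b) :
    palette (completeBipartiteGraph (Fin a) (Fin b)) c (Sum.inr j) =
      ((univ.image fun i : Fin a => c s(Sum.inl i, Sum.inr j) : Finset ℕ) : Set ℕ) := by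
  ext n
  simp only [palette, Set.mem_ofPred_eq, coe_image, coe_univ, Set.image_univ, Set.mem_range]
  constructor
  · rintro ⟨e, he, hv, rfl⟩
    obtain ⟨w, rfl⟩ := Sym2.mem_iff_exists.1 hv
    rcases w with w | w
    · exact ⟨w, by rw [Sym2.eq_swap]⟩
    · simp at he
  · rintro ⟨j, rfl⟩
    exact ⟨_, by simp, by simp, rfl⟩

theorem proper_iff {a b : ℕ} (c : Sym2 (Fin a ⊕ Fin b) → ℕ) :
    IsProperEdgeColoring (completeBipartiteGraph (Fin a) (Fin b)) c ↔
      (∀ i : Fin a, Function.Injective fun j : Fin b => c s(Sum.inl i, Sum.inr j)) ∧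
      (∀ j : Fin b, Function.Injective fun i : Fin a => c s(Sum.inl i, Sum.inr j)) := by
  constructor
  · intro h
    refine ⟨fun i j j' hj => ?_, fun j i i' hi => ?_⟩
    · by_contra hne
      exact h s(Sum.inl i, Sum.inr j) (by simp) s(Sum.inl i, Sum.inr j') (by simp)
        (by simpa using hne) ⟨Sum.inl i, by simp, by simp⟩ hj
    · by_contra hne
      exact h s(Sum.inl i, Sum.inr j) (by simp) s(Sum.inl i', Sum.inr j) (by simp)
        (by simpa using hne) ⟨Sum.inr j, by simp, by simp⟩ hi
  · rintro ⟨h1, h2⟩ e₁ he₁ e₂ he₂ hne ⟨v, hv₁, hv₂⟩ hc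
    obtain ⟨w, rfl⟩ := Sym2.mem_iff_exists.1 hv₁
    obtain ⟨w', rfl⟩ := Sym2.mem_iff_exists.1 hv₂
    apply hne
    rcases v with v | v <;> rcases w with w | w <;> rcases w' with w' | w' <;>
      simp at he₁ he₂
    · rw [h1 v hc]
    · rw [Sym2.eq_swap, Sym2.eq_swap (a := Sum.inr v)] at hc
      rw [h2 v hc]

theorem lower_aux (a b : ℕ) (ha : 0 < a) (hab : a < b) (c : Sym2 (Fin a ⊕ Fin b) → ℕ)
    (hc : IsProperEdgeColoring (completeBipartiteGraph (Fin a) (Fin b)) c) :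
    1 + (b + a - 1) / a ≤
      (Set.range (palette (completeBipartiteGraph (Fin a) (Fin b)) c)).ncard := by
  obtain ⟨h1, h2⟩ := (proper_iff c).1 hc
  let R : Fin b → Finset ℕ := fun j => univ.image fun i : Fin a => c s(Sum.inl i, Sum.inr j)
  let i0 : Fin a := ⟨0, ha⟩
  let L : Finset ℕ := univ.image fun j : Fin b => c s(Sum.inl i0, Sum.inr j)
  have hL : L.card = b := by
    simp only [L]; rw [card_image_of_injective _ (h1 i0)]; simp
  have hR : ∀ j, (R j).card = a := fun j => by
    simp only [R]; rw [card_image_of_injective _ (h2 j)]; simp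
  let F : Finset (Finset ℕ) := univ.image R
  have hcov : L ⊆ F.biUnion id := by
    intro n hn
    simp only [L, mem_image, mem_univ, true_and] at hn
    obtain ⟨j, rfl⟩ := hn
    exact mem_biUnion.2 ⟨R j, mem_image_of_mem _ (mem_univ _),
      mem_image_of_mem (fun i : Fin a => c s(Sum.inl i, Sum.inr j)) (mem_univ i0)⟩
  have hb : b ≤ F.card * a := by
    rw [← hL]
    refine (card_le_card hcov).trans (card_biUnion_le_card_mul _ _ _ ?_)
    intro s hs
    obtain ⟨j, -, rfl⟩ := mem_image.1 hs
    exact (hR j).le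
  have hLF : L ∉ F := by
    intro h
    obtain ⟨j, -, hj⟩ := mem_image.1 h
    have := hR j
    rw [hj, hL] at this
    omega
  have hsub : (((insert L F).image fun s : Finset ℕ => (s : Set ℕ) : Finset (Set ℕ)) : Set (Set ℕ)) ⊆
      Set.range (palette (completeBipartiteGraph (Fin a) (Fin b)) c) := by
    intro s hs
    simp only [coe_image, Set.mem_image, mem_coe, mem_insert] at hs
    obtain ⟨t, ht | ht, rfl⟩ := hs
    · exact ⟨Sum.inl i0, by rw [palette_inl, ht]⟩
    · obtain ⟨j, -, rfl⟩ := mem_image.1 ht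
      exact ⟨Sum.inr j, by rw [palette_inr]⟩
  have := Set.ncard_le_ncard hsub (Set.finite_range _)
  rw [Set.ncard_coe_finset, card_image_of_injective _ Finset.coe_injective,
    card_insert_of_notMem hLF] at this
  have h3 : (b + a - 1) / a ≤ F.card := by
    rw [← Nat.lt_succ_iff, Nat.div_lt_iff_lt_mul ha, Nat.succ_mul]
    omega
  omega

/-- symmetric extension of the coloring to all pairs of vertices -/
def vcol (g m : ℕ) {a b : ℕ} : Fin a ⊕ Fin b → Fin a ⊕ Fin b → ℕ
  | Sum.inl i, Sum.inr j => hcol g m i j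
  | Sum.inr j, Sum.inl i => hcol g m i j
  | _, _ => 0

theorem upper_aux (a b : ℕ) (ha : 0 < a) (hab : a < b) :
    ∃ c : Sym2 (Fin a ⊕ Fin b) → ℕ,
      IsProperEdgeColoring (completeBipartiteGraph (Fin a) (Fin b)) c ∧
      (Set.range (palette (completeBipartiteGraph (Fin a) (Fin b)) c)).ncard ≤
        1 + b / Nat.gcd a b := by
  obtain ⟨g, hgdef⟩ : ∃ g, g = Nat.gcd a b := ⟨_, rfl⟩
  rw [← hgdef]
  have hg : 0 < g := hgdef ▸ Nat.gcd_pos_of_pos_left b ha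
  obtain ⟨k, hk⟩ : g ∣ a := hgdef ▸ Nat.gcd_dvd_left a b
  obtain ⟨m, hm⟩ : g ∣ b := hgdef ▸ Nat.gcd_dvd_right a b
  have hbm : b / g = m := by rw [hm]; exact Nat.mul_div_cancel_left m hg
  rw [hbm]
  have hm0 : 0 < m := by rcases Nat.eq_zero_or_pos m with h | h; (· subst h; omega); exact h
  have hjm : ∀ j : ℕ, j < b → j / g < m := fun j hj => by
    rw [Nat.div_lt_iff_lt_mul hg, mul_comm]; omega
  have hik : ∀ i : ℕ, i < a → i / g < k := fun i hi => by
    rw [Nat.div_lt_iff_lt_mul hg, mul_comm]; omega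
  let c : Sym2 (Fin a ⊕ Fin b) → ℕ := Sym2.lift ⟨vcol g m, by
    rintro (x | x) (y | y) <;> rfl⟩
  have hcv : ∀ (i : Fin a) (j : Fin b), c s(Sum.inl i, Sum.inr j) = hcol g m i j :=
    fun i j => rfl
  have hproper : IsProperEdgeColoring (completeBipartiteGraph (Fin a) (Fin b)) c := by
    rw [proper_iff]
    refine ⟨fun i j j' h => ?_, fun j i i' h => ?_⟩
    · exact Fin.ext (hcol_inj hg (hjm _ j.2) (hjm _ j'.2) h)
    · simp only [hcv] at h
      rw [hcol_comm, hcol_comm g m i'] at h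
      exact Fin.ext (hcol_inj hg (hjm _ (i.2.trans hab)) (hjm _ (i'.2.trans hab)) h)
  refine ⟨c, hproper, ?_⟩
  obtain ⟨h1, h2⟩ := (proper_iff c).1 hproper
  let T : ℕ → Finset ℕ := fun y =>
    (range k ×ˢ range g).image fun p => ((p.1 + y) % m) * g + p.2
  have hT : ∀ y, (T y).card ≤ a := fun y => by
    refine card_image_le.trans ?_
    rw [card_product, card_range, card_range, hk, mul_comm]
  have hinl : ∀ i : Fin a, palette (completeBipartiteGraph (Fin a) (Fin b)) c (Sum.inl i) =
      (range b : Finset ℕ) := fun i => by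
    rw [palette_inl, Finset.coe_inj]
    apply eq_of_subset_of_card_le
    · intro n hn
      obtain ⟨j, -, rfl⟩ := mem_image.1 hn
      rw [mem_range, hcv]
      exact (hcol_lt hg hm0).trans_eq (by rw [hm, mul_comm])
    · rw [card_image_of_injective _ (h1 i)]; simp
  have hinr : ∀ j : Fin b, palette (completeBipartiteGraph (Fin a) (Fin b)) c (Sum.inr j) =
      (T (j / g) : Finset ℕ) := fun j => by
    rw [palette_inr, Finset.coe_inj]
    apply eq_of_subset_of_card_le
    · intro n hn
      obtain ⟨i, -, rfl⟩ := mem_image.1 hn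
      rw [hcv]
      exact mem_image.2 ⟨(i / g, (i + j) % g),
        mem_product.2 ⟨mem_range.2 (hik _ i.2), mem_range.2 (Nat.mod_lt _ hg)⟩, rfl⟩
    · rw [card_image_of_injective _ (h2 j)]; simpa using hT _
  have hsub : Set.range (palette (completeBipartiteGraph (Fin a) (Fin b)) c) ⊆
      (((insert (range b) ((range m).image T)).image
        fun s : Finset ℕ => (s : Set ℕ) : Finset (Set ℕ)) : Set (Set ℕ)) := by
    rintro _ ⟨v | v, rfl⟩
    · rw [hinl]
      exact mem_coe.2 (mem_image_of_mem _ (mem_insert_self _ _))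
    · rw [hinr]
      exact mem_coe.2 (mem_image_of_mem _ (mem_insert_of_mem
        (mem_image_of_mem _ (mem_range.2 (hjm _ v.2)))))
  have := Set.ncard_le_ncard hsub (Finset.finite_toSet _)
  rw [Set.ncard_coe_finset] at this
  refine this.trans (card_image_le.trans ((card_insert_le _ _).trans ?_))
  have h4 : ((range m).image T).card ≤ m := card_image_le.trans (by simp)
  omega

/-- For `0 < a < b`, `1 + ⌈b/a⌉ ≤ š(K_{a,b}) ≤ 1 + b / gcd(a,b)`. -/
theorem palette_index_completeBipartite (a b : ℕ) (ha : 0 < a) (hab : a < b) :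
    1 + (b + a - 1) / a ≤ paletteIndex (completeBipartiteGraph (Fin a) (Fin b)) ∧
      paletteIndex (completeBipartiteGraph (Fin a) (Fin b)) ≤ 1 + b / Nat.gcd a b := by
  obtain ⟨c, hc, hle⟩ := upper_aux a b ha hab
  have hmem : (Set.range (palette (completeBipartiteGraph (Fin a) (Fin b)) c)).ncard ∈
      {k | ∃ c : Sym2 (Fin a ⊕ Fin b) → ℕ,
        IsProperEdgeColoring (completeBipartiteGraph (Fin a) (Fin b)) c ∧
        (Set.range (palette (completeBipartiteGraph (Fin a) (Fin b)) c)).ncard = k} := by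
    rw [Set.mem_ofPred_eq]
    exact ⟨c, hc, rfl⟩
  constructor
  · unfold paletteIndex
    refine le_csInf ⟨_, hmem⟩ ?_
    intro k hk
    rw [Set.mem_ofPred_eq] at hk
    obtain ⟨c', hc', rfl⟩ := hk
    exact lower_aux a b ha hab c' hc'
  · exact (Nat.sInf_le hmem).trans hle
end

section
/- For all positive integers a < b with a dividing b, the complete bipartite graph K_{a,b} satisfies š(K_{a,b}) = 1 + b/a. -/
open SimpleGraph Finset

lemma pal_inl {a b : ℕ} (c : Sym2 (Fin a ⊕ Fin b) → ℕ) (i : Fin a) :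
    palette (completeBipartiteGraph (Fin a) (Fin b)) c (Sum.inl i)
      = ((univ.image (fun j : Fin b => c s(Sum.inl i, Sum.inr j)) : Finset ℕ) : Set ℕ) := by
  ext n
  simp only [palette, Set.mem_ofPred_eq, coe_image, Set.mem_image, coe_univ, Set.mem_univ, true_and]
  constructor
  · rintro ⟨e, he, hv, rfl⟩
    obtain ⟨w, rfl⟩ := Sym2.mem_iff_exists.1 hv
    rcases w with w | w
    · simp at he
    · exact ⟨w, rfl⟩
  · rintro ⟨j, rfl⟩
    exact ⟨_, by simp, by simp, rfl⟩

lemma pal_inr {a b : ℕ} (c : Sym2 (Fin a ⊕ Fin b) → ℕ) (j : Fin b) :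
    palette (completeBipartiteGraph (Fin a) (Fin b)) c (Sum.inr j)
      = ((univ.image (fun i : Fin a => c s(Sum.inl i, Sum.inr j)) : Finset ℕ) : Set ℕ) := by
  ext n
  simp only [palette, Set.mem_ofPred_eq, coe_image, Set.mem_image, coe_univ, Set.mem_univ, true_and]
  constructor
  · rintro ⟨e, he, hv, rfl⟩
    obtain ⟨w, rfl⟩ := Sym2.mem_iff_exists.1 hv
    rcases w with w | w
    · exact ⟨w, by rw [Sym2.eq_swap]⟩
    · simp at he
  · rintro ⟨j, rfl⟩
    exact ⟨_, by simp, by simp, rfl⟩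

lemma lower_bd (a b : ℕ) (ha : 0 < a) (hab : a < b) (c : Sym2 (Fin a ⊕ Fin b) → ℕ)
    (hc : IsProperEdgeColoring (completeBipartiteGraph (Fin a) (Fin b)) c) :
    1 + b / a ≤ (Set.range (palette (completeBipartiteGraph (Fin a) (Fin b)) c)).ncard := by
  classical
  set R : Fin b → Finset ℕ := fun j => univ.image (fun i : Fin a => c s(Sum.inl i, Sum.inr j)) with hR
  set i0 : Fin a := ⟨0, ha⟩
  set L : Finset ℕ := univ.image (fun j : Fin b => c s(Sum.inl i0, Sum.inr j)) with hL
  have hLc : L.card = b := by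
    rw [hL, card_image_of_injective]
    · simp
    · intro j j' h
      by_contra hne
      exact hc s(Sum.inl i0, Sum.inr j) (by simp) s(Sum.inl i0, Sum.inr j') (by simp)
        (by simpa using hne) ⟨Sum.inl i0, by simp, by simp⟩ h
  have hRc : ∀ j, (R j).card ≤ a := fun j => card_image_le.trans (by simp)
  set T : Finset (Finset ℕ) := univ.image R with hT
  have h1 : b ≤ T.card * a := by
    calc b = L.card := hLc.symm
      _ ≤ (T.biUnion id).card := by
        apply card_le_card
        intro n hn
        simp only [hL, mem_image, mem_univ, true_and] at hn
        obtain ⟨j, rfl⟩ := hn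
        simp only [hT, mem_biUnion, mem_image, mem_univ, true_and, id]
        exact ⟨R j, ⟨j, rfl⟩, by simp [hR]⟩
      _ ≤ T.card * a := by
        apply card_biUnion_le_card_mul
        intro s hs
        simp only [hT, mem_image, mem_univ, true_and] at hs
        obtain ⟨j, rfl⟩ := hs
        exact hRc j
  have h2 : L ∉ T := by
    intro h
    simp only [hT, mem_image, mem_univ, true_and] at h
    obtain ⟨j, hj⟩ := h
    have := hRc j
    rw [hj] at this
    omega
  have h3 : b / a ≤ T.card := Nat.div_le_of_le_mul (by rwa [mul_comm])
  have h4 : ((insert L T).image (fun s : Finset ℕ => (s : Set ℕ))).card = T.card + 1 := by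
    rw [card_image_of_injective _ coe_injective, card_insert_of_notMem h2]
  have h5 : (((insert L T).image (fun s : Finset ℕ => (s : Set ℕ)) : Finset (Set ℕ)) : Set (Set ℕ))
      ⊆ Set.range (palette (completeBipartiteGraph (Fin a) (Fin b)) c) := by
    intro S hS
    simp only [mem_coe, mem_image, mem_insert, hT, mem_univ, true_and] at hS
    obtain ⟨s, rfl | ⟨j, rfl⟩, rfl⟩ := hS
    · exact ⟨_, pal_inl c i0⟩
    · exact ⟨_, pal_inr c j⟩
  have h6 := Set.ncard_le_ncard h5 (Set.finite_range _)
  rw [Set.ncard_coe_finset, h4] at h6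
  omega

def colFun (a b : ℕ) : Fin a ⊕ Fin b → Fin a ⊕ Fin b → ℕ
  | .inl i, .inr j => a * (j.1 / a) + (i.1 + j.1) % a
  | .inr j, .inl i => a * (j.1 / a) + (i.1 + j.1) % a
  | _, _ => 0

def col (a b : ℕ) : Sym2 (Fin a ⊕ Fin b) → ℕ :=
  Sym2.lift ⟨colFun a b, by rintro (x | x) (y | y) <;> rfl⟩

lemma col_mk (a b : ℕ) (i : Fin a) (j : Fin b) :
    col a b s(Sum.inl i, Sum.inr j) = a * (j.1 / a) + (i.1 + j.1) % a := rfl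

lemma col_inj {a : ℕ} (ha : 0 < a) {q r q' r' : ℕ} (hr : r < a) (hr' : r' < a)
    (h : a * q + r = a * q' + r') : q = q' ∧ r = r' := by
  have h1 := congrArg (· / a) h
  have h2 := congrArg (· % a) h
  simp only [Nat.mul_add_div ha, Nat.mul_add_mod, Nat.div_eq_of_lt hr, Nat.div_eq_of_lt hr',
    Nat.mod_eq_of_lt hr, Nat.mod_eq_of_lt hr'] at h1 h2
  exact ⟨by omega, h2⟩

lemma edge_form {a b : ℕ} (e : Sym2 (Fin a ⊕ Fin b))
    (he : e ∈ (completeBipartiteGraph (Fin a) (Fin b)).edgeSet) :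
    ∃ i j, e = s(Sum.inl i, Sum.inr j) := by
  induction e with
  | _ x y =>
    rcases x with x | x <;> rcases y with y | y
    · simp at he
    · exact ⟨x, y, rfl⟩
    · exact ⟨y, x, Sym2.eq_swap⟩
    · simp at he

lemma left_inj {a b : ℕ} (ha : 0 < a) (i : Fin a) (j j' : Fin b)
    (h : col a b s(Sum.inl i, Sum.inr j) = col a b s(Sum.inl i, Sum.inr j')) : j = j' := by
  rw [col_mk, col_mk] at h
  obtain ⟨h1, h2⟩ := col_inj ha (Nat.mod_lt _ ha) (Nat.mod_lt _ ha) h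
  have h3 : j.1 % a = j'.1 % a := Nat.ModEq.add_left_cancel' i.1 h2
  ext
  rw [← Nat.div_add_mod j.1 a, ← Nat.div_add_mod j'.1 a, h1, h3]

lemma right_inj {a b : ℕ} (ha : 0 < a) (i i' : Fin a) (j : Fin b)
    (h : col a b s(Sum.inl i, Sum.inr j) = col a b s(Sum.inl i', Sum.inr j)) : i = i' := by
  rw [col_mk, col_mk] at h
  obtain ⟨h1, h2⟩ := col_inj ha (Nat.mod_lt _ ha) (Nat.mod_lt _ ha) h
  have h3 : i.1 % a = i'.1 % a := Nat.ModEq.add_right_cancel' j.1 h2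
  rw [Nat.mod_eq_of_lt i.2, Nat.mod_eq_of_lt i'.2] at h3
  exact Fin.ext h3

lemma col_proper (a b : ℕ) (ha : 0 < a) :
    IsProperEdgeColoring (completeBipartiteGraph (Fin a) (Fin b)) (col a b) := by
  rintro e he e' he' hne ⟨v, hv, hv'⟩ h
  obtain ⟨i, j, rfl⟩ := edge_form e he
  obtain ⟨i', j', rfl⟩ := edge_form e' he'
  rcases v with v | v
  · simp at hv hv'
    subst hv; subst hv'
    exact hne (by rw [left_inj ha _ _ _ h])
  · simp at hv hv'
    subst hv; subst hv'
    exact hne (by rw [right_inj ha _ _ _ h])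

lemma upper_bd (a m : ℕ) (ha : 0 < a) :
    (Set.range (palette (completeBipartiteGraph (Fin a) (Fin (a * m))) (col a (a * m)))).ncard
      ≤ 1 + m := by
  classical
  set B : ℕ → Finset ℕ := fun k => (range a).image (fun r => a * k + r) with hB
  set F : Finset (Set ℕ) := (insert (range (a * m)) ((range m).image B)).image
    (fun s : Finset ℕ => (s : Set ℕ)) with hF
  have hsub : Set.range (palette (completeBipartiteGraph (Fin a) (Fin (a * m))) (col a (a * m)))
      ⊆ (F : Set (Set ℕ)) := by
    rintro _ ⟨v, rfl⟩
    rw [hF, mem_coe, mem_image]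
    rcases v with i | j
    · refine ⟨_, mem_insert_self _ _, ?_⟩
      rw [pal_inl]
      congr 1
      symm
      apply eq_of_subset_of_card_le
      · intro n hn
        simp only [mem_image, mem_univ, true_and] at hn
        obtain ⟨j, rfl⟩ := hn
        rw [col_mk, mem_range]
        have h1 : j.1 / a < m := Nat.div_lt_of_lt_mul j.2
        have h2 : (i.1 + j.1) % a < a := Nat.mod_lt _ ha
        nlinarith
      · rw [card_image_of_injective _ (fun j j' h => left_inj ha i j j' h)]
        simp
    · have h1 : j.1 / a < m := Nat.div_lt_of_lt_mul j.2
      refine ⟨B (j.1 / a), mem_insert_of_mem (mem_image_of_mem _ (mem_range.2 h1)), ?_⟩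
      rw [pal_inr]
      congr 1
      symm
      apply eq_of_subset_of_card_le
      · intro n hn
        simp only [mem_image, mem_univ, true_and] at hn
        obtain ⟨i, rfl⟩ := hn
        rw [col_mk, hB]
        exact mem_image_of_mem _ (mem_range.2 (Nat.mod_lt _ ha))
      · rw [card_image_of_injective _ (fun i i' h => right_inj ha i i' j h)]
        exact card_image_le.trans (by simp)
  have h1 := Set.ncard_le_ncard hsub (Finset.finite_toSet _)
  rw [Set.ncard_coe_finset] at h1
  have h2 : F.card ≤ (insert (range (a * m)) ((range m).image B)).card := card_image_le
  have h3 := card_insert_le (range (a * m)) ((range m).image B)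
  have h4 : ((range m).image B).card ≤ (range m).card := card_image_le
  rw [card_range] at h4
  omega

/-- If `a ∣ b` and `a < b`, then `š(K_{a,b}) = 1 + b/a`. -/
theorem palette_index_completeBipartite_dvd (a b : ℕ) (ha : 0 < a) (hab : a < b)
    (hdvd : a ∣ b) :
    paletteIndex (completeBipartiteGraph (Fin a) (Fin b)) = 1 + b / a := by
  apply le_antisymm
  · obtain ⟨m, rfl⟩ := hdvd
    rw [Nat.mul_div_cancel_left m ha]
    refine le_trans ?_ (upper_bd a m ha)
    unfold paletteIndex
    apply Nat.sInf_le
    exact ⟨col a (a * m), col_proper a _ ha, rfl⟩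
  · apply le_csInf
    · exact ⟨_, col a b, col_proper a b ha, rfl⟩
    · rintro k ⟨c, hc, rfl⟩
      exact lower_bd a b ha hab c hc
end

section
/- For every integer r ≥ 2, if G is a (2,2r)-biregular bipartite graph, then š(G) = r + 1. -/
open SimpleGraph Finset

theorem aux_involutions {E : Type*} (σ τ : E → E) (hσ : ∀ e, σ (σ e) = e) (hτ : ∀ e, τ (τ e) = e)
    (hσ' : ∀ e, σ e ≠ e) (hτ' : ∀ e, τ e ≠ e) :
    ∃ f : E → Bool, (∀ e, f (σ e) = !f e) ∧ (∀ e, f (τ e) = !f e) := by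
  classical
  let S : Equiv.Perm E := ⟨σ, σ, hσ, hσ⟩
  let T : Equiv.Perm E := ⟨τ, τ, hτ, hτ⟩
  have hSS : S * S = 1 := by ext e; exact hσ e
  have hTT : T * T = 1 := by ext e; exact hτ e
  have hSi : S⁻¹ = S := inv_eq_of_mul_eq_one_left hSS
  have hTi : T⁻¹ = T := inv_eq_of_mul_eq_one_left hTT
  let R : Equiv.Perm E := S * T
  have hconj : S * R * S⁻¹ = R⁻¹ := by
    simp only [R, mul_inv_rev, hSi, hTi, ← mul_assoc, hSS, one_mul]
  have hconjz : ∀ k : ℤ, ∀ e, σ ((R ^ k) e) = (R ^ (-k)) (σ e) := by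
    intro k e
    have h : S * R ^ k * S⁻¹ = R ^ (-k) := by
      rw [← conj_zpow, hconj, inv_zpow, zpow_neg]
    have h2 : S * R ^ k = R ^ (-k) * S := by rw [← h]; group
    exact congrArg (fun g : Equiv.Perm E => g e) h2
  have key : ∀ e, ¬ R.SameCycle e (σ e) := by
    rintro e ⟨k, hk⟩
    rcases Int.even_or_odd' k with ⟨m, rfl | rfl⟩
    · apply hσ' ((R ^ m) e)
      rw [hconjz, ← hk, ← Equiv.Perm.mul_apply, ← zpow_add]
      congr 2; ring
    · apply hτ' ((R ^ m) e)
      have h1 : σ ((R ^ m) e) = (R ^ (m+1)) e := by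
        rw [hconjz, ← hk, ← Equiv.Perm.mul_apply, ← zpow_add]
        congr 2; ring
      have h2 : (R ^ (m+1)) e = σ (τ ((R ^ m) e)) := by
        rw [add_comm, zpow_add, zpow_one]; rfl
      have h3 := congrArg σ (h1.trans h2)
      rw [hσ, hσ] at h3
      exact h3.symm
  let st : Setoid E := Equiv.Perm.SameCycle.setoid R
  let Q := Quotient st
  have hresp : ∀ a b : E, R.SameCycle a b → R.SameCycle (σ a) (σ b) := by
    rintro a b ⟨k, rfl⟩
    exact ⟨-k, (hconjz k a).symm⟩
  obtain ⟨lo⟩ : Nonempty (LinearOrder Q) := ⟨linearOrderOfSTO (WellOrderingRel (α := Q))⟩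
  have hlt : ∀ e, (Quotient.mk st (σ e)) ≠ Quotient.mk st e := by
    intro e h
    exact key e (Quotient.exact h.symm : R.SameCycle e (σ e))
  have hs : ∀ e, decide (Quotient.mk st (σ e) < Quotient.mk st (σ (σ e)))
      = ! decide (Quotient.mk st e < Quotient.mk st (σ e)) := by
    intro e
    rw [hσ]
    rcases lt_or_gt_of_ne (hlt e) with h | h
    · simp [h, h.not_gt]
    · simp [h, h.not_gt]
  refine ⟨fun e => decide (Quotient.mk st e < Quotient.mk st (σ e)), hs, ?_⟩
  intro e
  have h1 : R.SameCycle (σ e) (τ e) := by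
    have : R.SameCycle (σ (τ (τ e))) (τ e) := by
      refine Equiv.Perm.SameCycle.symm ⟨1, ?_⟩
      rfl
    rwa [hτ] at this
  have h2 : Quotient.mk st (σ e) = Quotient.mk st (τ e) := Quotient.sound h1
  have h3 : Quotient.mk st (σ (σ e)) = Quotient.mk st (σ (τ e)) := Quotient.sound (hresp _ _ h1)
  have := hs e
  rw [h2, h3] at this
  show decide (Quotient.mk st (τ e) < Quotient.mk st (σ (τ e))) = ! decide (Quotient.mk st e < Quotient.mk st (σ e))
  rw [h2]
  exact this

theorem aux_fiberInv {E Y : Type*} [Fintype E] [DecidableEq Y] (q : E → Y) (r : ℕ)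
    (hq : ∀ y, (univ.filter (fun e => q e = y)).card = 2 * r) :
    ∃ σ : E → E, (∀ e, σ (σ e) = e) ∧ (∀ e, σ e ≠ e) ∧ (∀ e, q (σ e) = q e) := by
  classical
  have hE : ∀ y, Nonempty ({e // q e = y} ≃ Fin r × Bool) := by
    intro y
    refine ⟨Fintype.equivOfCardEq ?_⟩
    rw [Fintype.card_subtype, hq]
    simp [mul_comm]
  let φ : ∀ y, {e // q e = y} ≃ Fin r × Bool := fun y => (hE y).some
  let g : ∀ y, {e // q e = y} → {e // q e = y} := fun y e =>
    (φ y).symm (((φ y) e).1, !((φ y) e).2)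
  have gg : ∀ y e, g y (g y e) = e := by intro y e; simp [g]
  have gn : ∀ y e, g y e ≠ e := by
    intro y e h
    have := congrArg (fun z => (φ y z).2) h
    simp [g] at this
  have gσ : ∀ y (e : E) (h : q e = y), (g (q e) ⟨e, rfl⟩).1 = (g y ⟨e, h⟩).1 := by
    rintro y e rfl; rfl
  refine ⟨fun e => (g (q e) ⟨e, rfl⟩).1, ?_, ?_, ?_⟩
  · intro e
    have h := (g (q e) ⟨e, rfl⟩).2
    refine (gσ _ _ h).trans ?_
    exact congrArg Subtype.val (gg (q e) ⟨e, rfl⟩)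
  · intro e h
    exact gn (q e) ⟨e, rfl⟩ (Subtype.ext h)
  · intro e
    exact (g (q e) ⟨e, rfl⟩).2

theorem aux_edgeColor {E Y : Type*} [Fintype Y] [DecidableEq E] [DecidableEq Y] (s t : E → Y) :
    ∀ (r : ℕ) (A : Finset E), (∀ y, (A.filter (fun e => s e = y)).card = r) →
      (∀ y, (A.filter (fun e => t e = y)).card = r) →
      ∃ j : E → ℕ, (∀ e ∈ A, j e < r) ∧
        (∀ e ∈ A, ∀ e' ∈ A, j e = j e' → s e = s e' → e = e') ∧
        (∀ e ∈ A, ∀ e' ∈ A, j e = j e' → t e = t e' → e = e') := by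
  intro r
  induction r with
  | zero =>
    intro A hs _
    have hA : ∀ e, e ∉ A := by
      intro e he
      have := hs (s e)
      rw [Finset.card_eq_zero, Finset.filter_eq_empty_iff] at this
      exact this he rfl
    exact ⟨fun _ => 0, fun e he => (hA e he).elim, fun e he => (hA e he).elim,
      fun e he => (hA e he).elim⟩
  | succ r ih =>
    intro A hs ht
    have hall : ∀ S : Finset Y, S.card ≤
        (S.biUnion (fun y => (A.filter (fun e => s e = y)).image t)).card := by
      intro S
      set U := S.biUnion (fun y => (A.filter (fun e => s e = y)).image t) with hU
      have h1 : (A.filter (fun e => s e ∈ S)).card = S.card * (r+1) := by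
        rw [Finset.card_eq_sum_card_fiberwise (f := s) (t := S)]
        · rw [Finset.sum_const_nat (m := r+1)]
          intro y hy
          rw [← hs y, Finset.filter_filter]
          congr 1; ext e; simp only [Finset.mem_filter]; constructor
          · rintro ⟨a, b, c⟩; exact ⟨a, c⟩
          · rintro ⟨a, rfl⟩; exact ⟨a, hy, rfl⟩
        · intro e he; simp at he; exact he.2
      have h2 : (A.filter (fun e => t e ∈ U)).card = U.card * (r+1) := by
        rw [Finset.card_eq_sum_card_fiberwise (f := t) (t := U)]
        · rw [Finset.sum_const_nat (m := r+1)]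
          intro y hy
          rw [← ht y, Finset.filter_filter]
          congr 1; ext e; simp only [Finset.mem_filter]; constructor
          · rintro ⟨a, b, c⟩; exact ⟨a, c⟩
          · rintro ⟨a, rfl⟩; exact ⟨a, hy, rfl⟩
        · intro e he; exact (Finset.mem_filter.1 he).2
      have h3 : (A.filter (fun e => s e ∈ S)) ⊆ (A.filter (fun e => t e ∈ U)) := by
        intro e he
        rw [Finset.mem_filter] at he ⊢
        refine ⟨he.1, ?_⟩
        rw [hU, Finset.mem_biUnion]
        exact ⟨s e, he.2, Finset.mem_image.2 ⟨e, Finset.mem_filter.2 ⟨he.1, rfl⟩, rfl⟩⟩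
      have h4 := Finset.card_le_card h3
      rw [h1, h2] at h4
      exact Nat.le_of_mul_le_mul_right h4 (Nat.succ_pos r)
    obtain ⟨g, ginj, hg⟩ := (Finset.all_card_le_biUnion_card_iff_exists_injective _).1 hall
    have hg' : ∀ y, ∃ e, e ∈ A ∧ s e = y ∧ t e = g y := by
      intro y
      have := hg y
      simp only [Finset.mem_image, Finset.mem_filter] at this
      obtain ⟨e, ⟨a, b⟩, c⟩ := this
      exact ⟨e, a, b, c⟩
    choose m mA ms mt using hg'
    have gsurj : Function.Surjective g := Finite.injective_iff_surjective.1 ginj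
    let M : Finset E := univ.image m
    have hM : ∀ e, e ∈ M ↔ ∃ y, m y = e := by intro e; simp [M]
    have hs' : ∀ y, ((A \ M).filter (fun e => s e = y)).card = r := by
      intro y
      have : (A \ M).filter (fun e => s e = y) = (A.filter (fun e => s e = y)).erase (m y) := by
        ext e
        simp only [Finset.mem_filter, Finset.mem_sdiff, Finset.mem_erase, hM]
        constructor
        · rintro ⟨⟨a, b⟩, c⟩
          exact ⟨fun h => b ⟨y, h.symm⟩, a, c⟩
        · rintro ⟨a, b, c⟩
          refine ⟨⟨b, ?_⟩, c⟩
          rintro ⟨y', rfl⟩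
          rw [ms] at c; subst c; exact a rfl
      rw [this, Finset.card_erase_of_mem, hs]
      · rfl
      · exact Finset.mem_filter.2 ⟨mA y, ms y⟩
    have ht' : ∀ y, ((A \ M).filter (fun e => t e = y)).card = r := by
      intro y0
      obtain ⟨y, rfl⟩ := gsurj y0
      have : (A \ M).filter (fun e => t e = g y) = (A.filter (fun e => t e = g y)).erase (m y) := by
        ext e
        simp only [Finset.mem_filter, Finset.mem_sdiff, Finset.mem_erase, hM]
        constructor
        · rintro ⟨⟨a, b⟩, c⟩
          exact ⟨fun h => b ⟨y, h.symm⟩, a, c⟩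
        · rintro ⟨a, b, c⟩
          refine ⟨⟨b, ?_⟩, c⟩
          rintro ⟨y', rfl⟩
          rw [mt] at c; have c := ginj c; subst c; exact a rfl
      rw [this, Finset.card_erase_of_mem, ht]
      · rfl
      · exact Finset.mem_filter.2 ⟨mA y, mt y⟩
    obtain ⟨j, hj, js, jt⟩ := ih (A \ M) hs' ht'
    have hj' : ∀ e ∈ A, e ∉ M → j e < r := fun e a b => hj e (Finset.mem_sdiff.2 ⟨a, b⟩)
    refine ⟨fun e => if e ∈ M then r else j e, ?_, ?_, ?_⟩
    · intro e he
      dsimp only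
      split_ifs with h
      · omega
      · have := hj' e he h; omega
    · intro e he e' he' h1 h2
      dsimp only at h1
      split_ifs at h1 with h h' h'
      · obtain ⟨y, rfl⟩ := (hM _).1 h
        obtain ⟨y', rfl⟩ := (hM _).1 h'
        rw [ms, ms] at h2; rw [h2]
      · have := hj' _ he' h'; omega
      · have := hj' _ he h; omega
      · exact js e (Finset.mem_sdiff.2 ⟨he, h⟩) e' (Finset.mem_sdiff.2 ⟨he', h'⟩) h1 h2
    · intro e he e' he' h1 h2
      dsimp only at h1
      split_ifs at h1 with h h' h'
      · obtain ⟨y, rfl⟩ := (hM _).1 h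
        obtain ⟨y', rfl⟩ := (hM _).1 h'
        rw [mt, mt] at h2; rw [ginj h2]
      · have := hj' _ he' h'; omega
      · have := hj' _ he h; omega
      · exact jt e (Finset.mem_sdiff.2 ⟨he, h⟩) e' (Finset.mem_sdiff.2 ⟨he', h'⟩) h1 h2

theorem aux_main {E X Y : Type*} [Fintype E] [Fintype Y] [DecidableEq X] [DecidableEq Y]
    (p : E → X) (q : E → Y) (r : ℕ)
    (hp : ∀ x, (univ.filter (fun e => p e = x)).card = 2)
    (hq : ∀ y, (univ.filter (fun e => q e = y)).card = 2 * r) :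
    ∃ c : E → ℕ, (∀ e, c e < 2 * r) ∧ (∀ e e', q e = q e' → c e = c e' → e = e') ∧
      (∀ e e', p e = p e' → e ≠ e' → c e / 2 = c e' / 2 ∧ c e ≠ c e') := by
  classical
  obtain ⟨σ, σσ, σn, qσ⟩ := aux_fiberInv q r hq
  obtain ⟨τ, ττ, τn, pτ⟩ := aux_fiberInv p 1 (by simpa using hp)
  obtain ⟨f, fσ, fτ⟩ := aux_involutions σ τ σσ ττ σn τn
  have hτ : ∀ e e', p e = p e' → e ≠ e' → e' = τ e := by
    intro e e' h hne
    by_contra hcon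
    have h3 : ({e, e', τ e} : Finset E).card = 3 :=
      Finset.card_eq_three.2 ⟨e, e', τ e, hne, (τn e).symm, hcon, rfl⟩
    have : ({e, e', τ e} : Finset E) ⊆ univ.filter (fun z => p z = p e) := by
      intro z hz
      simp only [Finset.mem_insert, Finset.mem_singleton] at hz
      simp only [Finset.mem_filter, Finset.mem_univ, true_and]
      rcases hz with rfl | rfl | rfl
      · rfl
      · exact h.symm
      · exact pτ e
    have := Finset.card_le_card this
    rw [h3, hp] at this
    omega
  let A : Finset E := univ.filter (fun e => f e = true)
  have memA : ∀ e, e ∈ A ↔ f e = true := by intro e; simp [A]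
  have cnt : ∀ y, (A.filter (fun e => q e = y)).card = r ∧
      ((univ.filter (fun e => f e = false)).filter (fun e => q e = y)).card = r := by
    intro y
    have h1 : (A.filter (fun e => q e = y)).card =
        ((univ.filter (fun e => f e = false)).filter (fun e => q e = y)).card := by
      refine Finset.card_bij' (fun e _ => σ e) (fun e _ => σ e) ?_ ?_ ?_ ?_
      · intro e he; simp [A] at he ⊢; simp [fσ, qσ, he]
      · intro e he; simp [A] at he ⊢; simp [fσ, qσ, he]
      · intro e _; exact σσ e
      · intro e _; exact σσ e
    have h2 := Finset.card_filter_add_card_filter_not (s := univ.filter (fun e => q e = y))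
      (fun e => f e = true)
    rw [hq] at h2
    have h3 : (univ.filter (fun e => q e = y)).filter (fun e => f e = true)
      = A.filter (fun e => q e = y) := by ext e; simp [A, and_comm]
    have h4 : (univ.filter (fun e => q e = y)).filter (fun e => ¬ f e = true)
      = (univ.filter (fun e => f e = false)).filter (fun e => q e = y) := by
        ext e; simp [and_comm]
    rw [h3, h4] at h2
    omega
  have cnt2 : ∀ y, (A.filter (fun e => q (τ e) = y)).card = r := by
    intro y
    rw [← (cnt y).2]
    refine Finset.card_bij' (fun e _ => τ e) (fun e _ => τ e) ?_ ?_ ?_ ?_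
    · intro e he; simp [A] at he ⊢; simp [fτ, he]
    · intro e he; simp [A] at he ⊢; simp [fτ, ττ, he]
    · intro e _; exact ττ e
    · intro e _; exact ττ e
  obtain ⟨j, hj, js, jt⟩ := aux_edgeColor q (fun e => q (τ e)) r A (fun y => (cnt y).1) cnt2
  have τA : ∀ e, f e = false → τ e ∈ A := by intro e h; rw [memA, fτ, h]; rfl
  let c : E → ℕ := fun e => if f e = true then 2 * j e + 1 else 2 * j (τ e)
  have ct : ∀ e, f e = true → c e = 2 * j e + 1 := by intro e h; simp [c, h]
  have cf : ∀ e, f e = false → c e = 2 * j (τ e) := by intro e h; simp [c, h]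
  refine ⟨c, ?_, ?_, ?_⟩
  · intro e
    cases h : f e
    · rw [cf e h]; have := hj _ (τA e h); omega
    · rw [ct e h]; have := hj _ ((memA e).2 h); omega
  · intro e e' h1 h2
    cases h : f e <;> cases h' : f e'
    · rw [cf e h, cf e' h'] at h2
      have := jt _ (τA e h) _ (τA e' h') (by omega) (by simpa [ττ] using h1)
      have := congrArg τ this
      rwa [ττ, ττ] at this
    · rw [cf e h, ct e' h'] at h2; omega
    · rw [ct e h, cf e' h'] at h2; omega
    · rw [ct e h, ct e' h'] at h2
      exact js _ ((memA e).2 h) _ ((memA e').2 h') (by omega) h1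
  · intro e e' h1 h2
    have := hτ e e' h1 h2
    subst this
    cases h : f e
    · rw [cf e h, ct (τ e) (by rw [fτ, h]; rfl)]; omega
    · rw [ct e h, cf (τ e) (by rw [fτ, h]; rfl), ττ]; omega

theorem aux_palette {V : Type*} [Fintype V] [DecidableEq V] (G : SimpleGraph V)
    [DecidableRel G.Adj] (c : Sym2 V → ℕ) (v : V) :
    palette G c v = (((G.incidenceFinset v).image c : Finset ℕ) : Set ℕ) := by
  ext n
  simp [palette, SimpleGraph.incidenceSet, and_assoc]

theorem aux_paletteCard {V : Type*} [Fintype V] [DecidableEq V] (G : SimpleGraph V)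
    [DecidableRel G.Adj] (c : Sym2 V → ℕ) (hc : IsProperEdgeColoring G c) (v : V) :
    ((G.incidenceFinset v).image c).card = G.degree v := by
  rw [Finset.card_image_of_injOn, SimpleGraph.card_incidenceFinset_eq_degree]
  intro e he e' he' h
  simp [SimpleGraph.incidenceSet] at he he'
  by_contra hne
  exact hc e he.1 e' he'.1 hne ⟨v, he.2, he'.2⟩ h

theorem aux_lower {V : Type*} [Fintype V]
    (G : SimpleGraph V) [DecidableRel G.Adj] (r : ℕ) (hr : 2 ≤ r)
    (hG : IsBiregular G 2 (2 * r)) (c : Sym2 V → ℕ) (hc : IsProperEdgeColoring G c) :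
    r + 1 ≤ (Set.range (palette G c)).ncard := by
  classical
  obtain ⟨X, Y, hX, ⟨y, hy⟩, hd, hcov, hadj, dX, dY⟩ := hG
  let P : V → Finset ℕ := fun v => (G.incidenceFinset v).image c
  have hP : ∀ v, (P v).card = G.degree v := aux_paletteCard G c hc
  have hsub : P y ⊆ (X.image P).biUnion id := by
    intro n hn
    simp only [P, Finset.mem_image, SimpleGraph.mem_incidenceFinset] at hn
    obtain ⟨e, he, rfl⟩ := hn
    obtain ⟨heG, hye⟩ := he
    obtain ⟨w, rfl⟩ := hye
    have hw : w ∈ X := by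
      rcases hadj y w heG with h | h
      · exact absurd hy (Finset.disjoint_left.1 hd h.1)
      · exact h.2
    rw [Finset.mem_biUnion]
    refine ⟨P w, Finset.mem_image_of_mem _ hw, ?_⟩
    simp only [id, P, Finset.mem_image, SimpleGraph.mem_incidenceFinset]
    exact ⟨s(y, w), ⟨heG, Sym2.mem_mk_right _ _⟩, rfl⟩
  have h1 := Finset.card_le_card hsub
  have h2 : ((X.image P).biUnion id).card ≤ (X.image P).card * 2 := by
    apply Finset.card_biUnion_le_card_mul
    intro s hs
    obtain ⟨x, hx, rfl⟩ := Finset.mem_image.1 hs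
    simp [hP, dX x hx]
  rw [hP, dY y hy] at h1
  have hnot : P y ∉ X.image P := by
    intro h
    obtain ⟨x, hx, hxy⟩ := Finset.mem_image.1 h
    have := congrArg Finset.card hxy
    rw [hP, hP, dX x hx, dY y hy] at this
    omega
  have h3 : (insert (P y) (X.image P)).card = (X.image P).card + 1 := Finset.card_insert_of_notMem hnot
  have h4 : insert (P y) (X.image P) ⊆ univ.image P := by
    intro s hs
    rw [Finset.mem_insert, Finset.mem_image] at hs
    rcases hs with rfl | ⟨x, _, rfl⟩ <;> exact Finset.mem_image_of_mem _ (Finset.mem_univ _)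
  have h5 := Finset.card_le_card h4
  have h6 : (Set.range (palette G c)).ncard = (univ.image P).card := by
    have : Set.range (palette G c) = (fun s : Finset ℕ => (s : Set ℕ)) '' (univ.image P : Finset (Finset ℕ)) := by
      ext s
      simp [aux_palette, P]
    rw [this, Set.ncard_image_of_injective _ Finset.coe_injective, Set.ncard_coe_finset]
  omega

theorem aux_upper {V : Type*} [Fintype V]
    (G : SimpleGraph V) [DecidableRel G.Adj] (r : ℕ)
    (hG : IsBiregular G 2 (2 * r)) :
    ∃ c : Sym2 V → ℕ, IsProperEdgeColoring G c ∧ (Set.range (palette G c)).ncard ≤ r + 1 := by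
  classical
  obtain ⟨X, Y, hX, hY, hd, hcov, hadj, dX, dY⟩ := hG
  have hend : ∀ e : G.edgeSet, ∃ x : X, ∃ y : Y, e.1 = s(x.1, y.1) := by
    rintro ⟨e, he⟩
    induction e with
    | h a b =>
      rcases hadj a b he with h | h
      · exact ⟨⟨a, h.1⟩, ⟨b, h.2⟩, rfl⟩
      · exact ⟨⟨b, h.2⟩, ⟨a, h.1⟩, Sym2.eq_swap⟩
  choose p q hpq using hend
  have hp : ∀ e x, p e = x ↔ x.1 ∈ e.1 := by
    intro e x
    rw [hpq, Sym2.mem_iff]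
    constructor
    · rintro rfl; exact Or.inl rfl
    · rintro (h | h)
      · exact Subtype.ext h.symm
      · exact absurd (h ▸ (q e).2) (Finset.disjoint_left.1 hd x.2)
  have hq : ∀ e y, q e = y ↔ y.1 ∈ e.1 := by
    intro e y
    rw [hpq, Sym2.mem_iff]
    constructor
    · rintro rfl; exact Or.inr rfl
    · rintro (h | h)
      · exact absurd y.2 (Finset.disjoint_left.1 hd (h ▸ (p e).2))
      · exact Subtype.ext h.symm
  have hcard : ∀ v : V, (univ.filter (fun e : G.edgeSet => v ∈ e.1)).card = G.degree v := by
    intro v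
    rw [← SimpleGraph.card_incidenceFinset_eq_degree]
    refine Finset.card_bij (fun e _ => e.1) ?_ ?_ ?_
    · intro e he
      rw [SimpleGraph.mem_incidenceFinset]
      exact ⟨e.2, (Finset.mem_filter.1 he).2⟩
    · intro e _ e' _ h; exact Subtype.ext h
    · intro e he
      rw [SimpleGraph.mem_incidenceFinset] at he
      exact ⟨⟨e, he.1⟩, Finset.mem_filter.2 ⟨Finset.mem_univ _, he.2⟩, rfl⟩
  obtain ⟨c, clt, cq, cp⟩ := aux_main p q r
    (by intro x; simp only [hp]; rw [hcard, dX _ x.2])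
    (by intro y; simp only [hq]; rw [hcard, dY _ y.2])
  let C : Sym2 V → ℕ := fun e => if h : e ∈ G.edgeSet then c ⟨e, h⟩ else 0
  have hC : ∀ e (h : e ∈ G.edgeSet), C e = c ⟨e, h⟩ := by intro e h; simp only [C]; rw [dif_pos h]
  have hproper : IsProperEdgeColoring G C := by
    rintro e he e' he' hne ⟨v, hv, hv'⟩ h
    rw [hC e he, hC e' he'] at h
    have hne' : (⟨e, he⟩ : G.edgeSet) ≠ ⟨e', he'⟩ := fun h => hne (congrArg Subtype.val h)
    rcases hcov v with hx | hy
    · exact (cp ⟨e, he⟩ ⟨e', he'⟩ (((hp _ ⟨v, hx⟩).2 hv).trans ((hp _ ⟨v, hx⟩).2 hv').symm) hne').2 h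
    · exact hne' (cq ⟨e, he⟩ ⟨e', he'⟩
        (((hq _ ⟨v, hy⟩).2 hv).trans ((hq _ ⟨v, hy⟩).2 hv').symm) h)
  refine ⟨C, hproper, ?_⟩
  have hsub : Set.range (palette G C) ⊆
      ((insert (Set.Iio (2 * r)) ((Finset.range r).image (fun i => {n : ℕ | n / 2 = i})) :
        Finset (Set ℕ)) : Set (Set ℕ)) := by
    rintro _ ⟨v, rfl⟩
    rw [Finset.mem_coe, Finset.mem_insert, Finset.mem_image]
    rcases hcov v with hx | hy
    · right
      have h2 : 1 < (univ.filter (fun e : G.edgeSet => v ∈ e.1)).card := by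
        rw [hcard, dX v hx]; norm_num
      obtain ⟨a, ha, b, hb, hab⟩ := Finset.one_lt_card.1 h2
      have ha := (Finset.mem_filter.1 ha).2
      have hb := (Finset.mem_filter.1 hb).2
      have hcp : ∀ e : G.edgeSet, v ∈ e.1 → a ≠ e → c a / 2 = c e / 2 ∧ c a ≠ c e := fun e he =>
        cp a e (((hp _ ⟨v, hx⟩).2 ha).trans ((hp _ ⟨v, hx⟩).2 he).symm)
      refine ⟨c a / 2, ?_, ?_⟩
      · rw [Finset.mem_range]; have := clt a; omega
      · ext n
        constructor
        · intro hn
          have hn : n / 2 = c a / 2 := hn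
          obtain ⟨h3, h4⟩ := hcp b hb hab
          have : n = c a ∨ n = c b := by omega
          rcases this with rfl | rfl
          · exact ⟨a.1, a.2, ha, hC _ a.2⟩
          · exact ⟨b.1, b.2, hb, hC _ b.2⟩
        · rintro ⟨e, he, hve, rfl⟩
          rw [hC e he]
          show c ⟨e, he⟩ / 2 = c a / 2
          by_cases h : a = ⟨e, he⟩
          · rw [h]
          · exact (hcp ⟨e, he⟩ hve h).1.symm
    · left
      rw [aux_palette, ← Finset.coe_range]
      · congr 1
        apply Finset.eq_of_subset_of_card_le
        · intro n hn
          obtain ⟨e, he, rfl⟩ := Finset.mem_image.1 hn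
          rw [SimpleGraph.mem_incidenceFinset] at he
          rw [hC e he.1, Finset.mem_range]
          exact clt _
        · rw [aux_paletteCard G C hproper, dY v hy, Finset.card_range]
  refine (Set.ncard_le_ncard hsub (Finset.finite_toSet _)).trans ?_
  rw [Set.ncard_coe_finset]
  refine (Finset.card_insert_le _ _).trans ?_
  have := Finset.card_image_le (s := Finset.range r) (f := fun i => {n : ℕ | n / 2 = i})
  rw [Finset.card_range] at this
  omega

/-- If `G` is a `(2,2r)`-biregular graph, then `š(G) = r + 1`. -/
theorem palette_index_two_twoR_biregular {V : Type*} [Fintype V]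
    (G : SimpleGraph V) [DecidableRel G.Adj] (r : ℕ) (hr : 2 ≤ r)
    (hG : IsBiregular G 2 (2 * r)) :
    paletteIndex G = r + 1 := by
  obtain ⟨c, hc, hle⟩ := aux_upper G r hG
  have heq := le_antisymm hle (aux_lower G r hr hG c hc)
  apply le_antisymm
  · exact Nat.sInf_le ⟨c, hc, heq⟩
  · refine le_csInf (Set.nonempty_of_mem (x := r + 1) ⟨c, hc, heq⟩) ?_
    rintro k ⟨c', hc', rfl⟩
    exact aux_lower G r hr hG c' hc'
end

section
/- For every integer r ≥ 2: (i) if G is a (3,3r)-biregular bipartite graph, then r + 1 ≤ š(G) ≤ r² + 1; (ii) if G is a (3r−3,3r)-biregular bipartite graph, then š(G) ≤ r² + 1. -/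
open SimpleGraph Finset

theorem pi_matching {α P Q : Type*} [DecidableEq α] [DecidableEq P] [DecidableEq Q]
    (k : ℕ) (hk : 0 < k) (E : Finset α) (p : α → P) (q : α → Q)
    (hp : ∀ e ∈ E, #{f ∈ E | p f = p e} = k) (hq : ∀ e ∈ E, #{f ∈ E | q f = q e} = k) :
    ∃ M ⊆ E, (∀ e ∈ E, #{f ∈ M | p f = p e} = 1) ∧ (∀ e ∈ E, #{f ∈ M | q f = q e} = 1) := by
  have cardp : ∀ S ⊆ E.image p, #{e ∈ E | p e ∈ S} = k * #S := by
    intro S hS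
    rw [Finset.card_eq_sum_card_fiberwise (f := p) (t := S) (by intro e he; simp at he; exact he.2)]
    rw [Finset.sum_const_nat (m := k), mul_comm]
    intro i hi
    obtain ⟨e, he, rfl⟩ := Finset.mem_image.1 (hS hi)
    rw [← hp e he, Finset.filter_filter]
    congr 1; ext f; simp only [Finset.mem_filter]
    constructor
    · rintro ⟨h1, h2, h3⟩; exact ⟨h1, h3⟩
    · rintro ⟨h1, h3⟩; exact ⟨h1, h3 ▸ hi, h3⟩
  have cardq : ∀ S ⊆ E.image q, #{e ∈ E | q e ∈ S} = k * #S := by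
    intro S hS
    rw [Finset.card_eq_sum_card_fiberwise (f := q) (t := S) (by intro e he; simp at he; exact he.2)]
    rw [Finset.sum_const_nat (m := k), mul_comm]
    intro i hi
    obtain ⟨e, he, rfl⟩ := Finset.mem_image.1 (hS hi)
    rw [← hq e he, Finset.filter_filter]
    congr 1; ext f; simp only [Finset.mem_filter]
    constructor
    · rintro ⟨h1, h2, h3⟩; exact ⟨h1, h3⟩
    · rintro ⟨h1, h3⟩; exact ⟨h1, h3 ▸ hi, h3⟩
  let t : {i // i ∈ E.image p} → Finset Q := fun i => ({e ∈ E | p e = i.1} : Finset α).image q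
  have hall : ∀ s : Finset {i // i ∈ E.image p}, #s ≤ #(s.biUnion t) := by
    intro s
    have h1 := cardp (s.map (Function.Embedding.subtype _)) (by
      intro i hi
      simp only [Finset.mem_map, Function.Embedding.subtype_apply] at hi
      obtain ⟨a, _, rfl⟩ := hi
      exact a.2)
    have h2 := cardq (s.biUnion t) (by
      intro i hi
      simp only [Finset.mem_biUnion, t, Finset.mem_image, Finset.mem_filter] at hi
      obtain ⟨_, _, e, ⟨he, _⟩, rfl⟩ := hi
      exact Finset.mem_image_of_mem _ he)
    rw [Finset.card_map] at h1
    have h3 : ({e ∈ E | p e ∈ s.map (Function.Embedding.subtype _)} : Finset α) ⊆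
        ({e ∈ E | q e ∈ s.biUnion t} : Finset α) := by
      intro e he
      simp only [Finset.mem_filter, Finset.mem_map, Function.Embedding.subtype_apply] at he
      obtain ⟨he, a, ha, hae⟩ := he
      simp only [Finset.mem_filter, Finset.mem_biUnion, t, Finset.mem_image]
      exact ⟨he, a, ha, e, ⟨he, hae.symm⟩, rfl⟩
    have h4 := Finset.card_le_card h3
    rw [h1, h2] at h4
    exact Nat.le_of_mul_le_mul_left h4 hk
  obtain ⟨f, finj, hf⟩ := (Finset.all_card_le_biUnion_card_iff_exists_injective t).1 hall
  have : ∀ i, ∃ e ∈ E, p e = i.1 ∧ q e = f i := by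
    intro i
    have := hf i
    simp only [t, Finset.mem_image, Finset.mem_filter] at this
    obtain ⟨e, ⟨h1, h2⟩, h3⟩ := this
    exact ⟨e, h1, h2, h3⟩
  choose m hmE hmp hmq using this
  have hcard : #(E.image p) = #(E.image q) := by
    have h1 := cardp _ subset_rfl
    have h2 := cardq _ subset_rfl
    rw [Finset.filter_true_of_mem (fun e he => Finset.mem_image_of_mem _ he)] at h1 h2
    exact Nat.eq_of_mul_eq_mul_left hk (h1.symm.trans h2)
  have hsurj : Finset.univ.image f = E.image q := by
    apply Finset.eq_of_subset_of_card_le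
    · intro j hj
      obtain ⟨i, _, rfl⟩ := Finset.mem_image.1 hj
      rw [← hmq]; exact Finset.mem_image_of_mem _ (hmE i)
    · rw [Finset.card_image_of_injective _ finj, ← hcard]; simp
  refine ⟨Finset.univ.image m, ?_, ?_, ?_⟩
  · intro e he
    obtain ⟨i, _, rfl⟩ := Finset.mem_image.1 he
    exact hmE i
  · intro e he
    rw [Finset.card_eq_one]
    refine ⟨m ⟨p e, Finset.mem_image_of_mem _ he⟩, ?_⟩
    ext g
    simp only [Finset.mem_filter, Finset.mem_image, Finset.mem_univ, true_and, Finset.mem_singleton]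
    constructor
    · rintro ⟨⟨i, rfl⟩, h⟩
      congr 1; apply Subtype.ext; exact (hmp i).symm.trans h
    · rintro rfl; exact ⟨⟨_, rfl⟩, hmp _⟩
  · intro e he
    rw [Finset.card_eq_one]
    have : q e ∈ Finset.univ.image f := hsurj ▸ Finset.mem_image_of_mem _ he
    obtain ⟨j, _, hj⟩ := Finset.mem_image.1 this
    refine ⟨m j, ?_⟩
    ext g
    simp only [Finset.mem_filter, Finset.mem_image, Finset.mem_univ, true_and, Finset.mem_singleton]
    constructor
    · rintro ⟨⟨i, rfl⟩, h⟩
      congr 1; apply finj; rw [hj, ← h, hmq]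
    · rintro rfl; exact ⟨⟨_, rfl⟩, by rw [hmq, hj]⟩

theorem pi_konig {α P Q : Type*} [DecidableEq α] [DecidableEq P] [DecidableEq Q]
    (p : α → P) (q : α → Q) (k : ℕ) : ∀ (E : Finset α)
    (_ : ∀ e ∈ E, #{f ∈ E | p f = p e} = k) (_ : ∀ e ∈ E, #{f ∈ E | q f = q e} = k),
    ∃ c : α → ℕ, (∀ e ∈ E, c e < k) ∧ (∀ e ∈ E, ∀ f ∈ E, p e = p f → c e = c f → e = f) ∧
      (∀ e ∈ E, ∀ f ∈ E, q e = q f → c e = c f → e = f) := by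
  induction k with
  | zero =>
    intro E hp hq
    have : E = ∅ := by
      apply Finset.eq_empty_of_forall_notMem
      intro e he
      have := hp e he
      rw [Finset.card_eq_zero] at this
      have h2 : e ∈ ({f ∈ E | p f = p e} : Finset α) := by simp [he]
      rw [this] at h2; simp at h2
    subst this
    exact ⟨fun _ => 0, by simp⟩
  | succ k ih =>
    intro E hp hq
    obtain ⟨M, hME, hMp, hMq⟩ := pi_matching (k+1) (Nat.succ_pos k) E p q hp hq
    have aux : ∀ (R : α → Prop) [DecidablePred R], #{f ∈ E | R f} = k + 1 → #{f ∈ M | R f} = 1 →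
        #{f ∈ E \ M | R f} = k := by
      intro R _ h1 h2
      have : ({f ∈ E \ M | R f} : Finset α) = {f ∈ E | R f} \ {f ∈ M | R f} := by
        ext f; simp only [Finset.mem_filter, Finset.mem_sdiff]; tauto
      rw [this, Finset.card_sdiff_of_subset (Finset.filter_subset_filter _ hME), h1, h2]; rfl
    obtain ⟨c, hc, hcp, hcq⟩ := ih (E \ M)
      (fun e he => aux _ (hp e (Finset.mem_sdiff.1 he).1) (hMp e (Finset.mem_sdiff.1 he).1))
      (fun e he => aux _ (hq e (Finset.mem_sdiff.1 he).1) (hMq e (Finset.mem_sdiff.1 he).1))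
    refine ⟨fun e => if e ∈ M then k else c e, ?_, ?_, ?_⟩
    · intro e he
      by_cases h : e ∈ M
      · simp [h]
      · have := hc e (Finset.mem_sdiff.2 ⟨he, h⟩)
        simp [h]; omega
    · intro e he f hf hpe hcc
      by_cases h : e ∈ M <;> by_cases h' : f ∈ M <;> simp only [h, h', if_true, if_false] at hcc
      · exact Finset.card_le_one.1 (hMp e he).le e (by simp [h]) f (by simp [h', hpe])
      · have := hc f (Finset.mem_sdiff.2 ⟨hf, h'⟩); omega
      · have := hc e (Finset.mem_sdiff.2 ⟨he, h⟩); omega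
      · exact hcp e (Finset.mem_sdiff.2 ⟨he, h⟩) f (Finset.mem_sdiff.2 ⟨hf, h'⟩) hpe hcc
    · intro e he f hf hpe hcc
      by_cases h : e ∈ M <;> by_cases h' : f ∈ M <;> simp only [h, h', if_true, if_false] at hcc
      · exact Finset.card_le_one.1 (hMq e he).le e (by simp [h]) f (by simp [h', hpe])
      · have := hc f (Finset.mem_sdiff.2 ⟨hf, h'⟩); omega
      · have := hc e (Finset.mem_sdiff.2 ⟨he, h⟩); omega
      · exact hcq e (Finset.mem_sdiff.2 ⟨he, h⟩) f (Finset.mem_sdiff.2 ⟨hf, h'⟩) hpe hcc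

/-- Blocks. -/
theorem pi_block {α : Type*} [DecidableEq α] (k m : ℕ) (hk : 0 < k) (s : Finset α)
    (hs : #s = k * m) :
    ∃ g : α → ℕ, (∀ e ∈ s, g e < m) ∧ ∀ i < m, #{e ∈ s | g e = i} = k := by
  induction m generalizing s with
  | zero =>
    have : s = ∅ := by simpa using hs
    subst this; exact ⟨fun _ => 0, by simp⟩
  | succ m ih =>
    obtain ⟨t, hts, htc⟩ := Finset.exists_subset_card_eq (s := s) (n := k) (by rw [hs]; nlinarith)
    obtain ⟨g, hg, hg2⟩ := ih (s \ t) (by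
      rw [Finset.card_sdiff_of_subset hts, hs, htc, Nat.mul_succ]; omega)
    refine ⟨fun e => if e ∈ t then m else g e, ?_, ?_⟩
    · intro e he
      by_cases h : e ∈ t
      · simp [h]
      · have := hg e (Finset.mem_sdiff.2 ⟨he, h⟩); simp [h]; omega
    · intro i hi
      rcases Nat.lt_succ_iff_lt_or_eq.1 hi with hi | rfl
      · rw [← hg2 i hi]; congr 1; ext e
        simp only [Finset.mem_filter, Finset.mem_sdiff]
        by_cases h : e ∈ t
        · simp [h]; intro _; omega
        · simp [h]
      · rw [← htc]; congr 1; ext e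
        simp only [Finset.mem_filter]
        by_cases h : e ∈ t
        · simp [h, hts h]
        · simp only [h, if_false, iff_false, not_and]
          intro he; have := hg e (Finset.mem_sdiff.2 ⟨he, h⟩); omega

theorem pi_blocks {α P : Type*} [DecidableEq α] [DecidableEq P] (k : ℕ) (hk : 0 < k)
    (E : Finset α) (p : α → P) (hp : ∀ e ∈ E, k ∣ #{f ∈ E | p f = p e}) :
    ∃ g : α → ℕ, ∀ e ∈ E, #{f ∈ E | (p f, g f) = (p e, g e)} = k := by
  have : ∀ i : P, ∃ g : α → ℕ, ∀ e ∈ E, p e = i → #{f ∈ E | p f = i ∧ g f = g e} = k := by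
    intro i
    by_cases hi : ∃ e ∈ E, p e = i
    · obtain ⟨e, he, rfl⟩ := hi
      obtain ⟨m, hm⟩ := hp e he
      obtain ⟨g, h1, h2⟩ := pi_block k m hk _ hm
      refine ⟨g, fun f hf hfe => ?_⟩
      rw [← h2 (g f) (h1 f (by simp [hf, hfe])), Finset.filter_filter]
    · exact ⟨fun _ => 0, fun e he h => absurd ⟨e, he, h⟩ hi⟩
  choose g hg using this
  refine ⟨fun e => g (p e) e, fun e he => ?_⟩
  rw [← hg (p e) e he rfl]
  congr 1; ext f; simp only [Finset.mem_filter, Prod.mk.injEq]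
  constructor
  · rintro ⟨h1, h2, h3⟩; rw [h2] at h3; exact ⟨h1, h2, h3⟩
  · rintro ⟨h1, h2, h3⟩; rw [h2]; exact ⟨h1, rfl, h3⟩

theorem pi_count {α P : Type*} [DecidableEq α] [DecidableEq P] (k : ℕ)
    (E : Finset α) (p : α → P) (g c : α → ℕ) 
    (hg : ∀ e ∈ E, #{f ∈ E | (p f, g f) = (p e, g e)} = k) (hc : ∀ e ∈ E, c e < k)
    (hinj : ∀ e ∈ E, ∀ f ∈ E, (p e, g e) = (p f, g f) → c e = c f → e = f) (x : P) (i : ℕ)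
    (hi : i < k) : k * #{f ∈ {f ∈ E | c f = i} | p f = x} = #{f ∈ E | p f = x} := by
  have img : ∀ e ∈ E, ∃ f ∈ E, (p f, g f) = (p e, g e) ∧ c f = i := by
    intro e he
    have : ({f ∈ E | (p f, g f) = (p e, g e)} : Finset α).image c = Finset.range k := by
      apply Finset.eq_of_subset_of_card_le
      · intro j hj
        obtain ⟨f, hf, rfl⟩ := Finset.mem_image.1 hj
        exact Finset.mem_range.2 (hc f (Finset.mem_filter.1 hf).1)
      · rw [Finset.card_image_of_injOn, hg e he, Finset.card_range]
        intro f hf f' hf' h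
        simp only [Finset.coe_filter, Set.mem_ofPred_eq] at hf hf'
        exact hinj f hf.1 f' hf'.1 (hf.2.trans hf'.2.symm) h
    have hi' : i ∈ Finset.range k := Finset.mem_range.2 hi
    rw [← this] at hi'
    obtain ⟨f, hf, rfl⟩ := Finset.mem_image.1 hi'
    exact ⟨f, (Finset.mem_filter.1 hf).1, (Finset.mem_filter.1 hf).2, rfl⟩
  rw [Finset.card_eq_sum_card_fiberwise (s := {f ∈ E | p f = x}) (f := g)
    (t := ({f ∈ {f ∈ E | c f = i} | p f = x} : Finset α).image g)]
  · rw [Finset.sum_const_nat (m := k), mul_comm, Finset.card_image_of_injOn]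
    · intro f hf f' hf' h
      simp only [Finset.coe_filter, Set.mem_ofPred_eq, Finset.mem_filter] at hf hf'
      exact hinj f hf.1.1 f' hf'.1.1 (by rw [hf.2, hf'.2, h]) (hf.1.2.trans hf'.1.2.symm)
    · intro j hj
      obtain ⟨f, hf, rfl⟩ := Finset.mem_image.1 hj
      simp only [Finset.mem_filter] at hf
      rw [← hg f hf.1.1, Finset.filter_filter]
      congr 1; ext f'; simp [hf.2]
  · intro e he
    simp only [Finset.coe_filter, Set.mem_ofPred_eq] at he
    obtain ⟨f, hf, h1, h2⟩ := img e he.1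
    simp only [Prod.mk.injEq] at h1
    simp only [Finset.coe_image, Set.mem_image, Finset.coe_filter, Set.mem_ofPred_eq, Finset.mem_filter]
    exact ⟨f, ⟨⟨hf, h2⟩, h1.1.trans he.2⟩, h1.2⟩

theorem pi_split {α P Q : Type*} [DecidableEq α] [DecidableEq P] [DecidableEq Q]
    (k : ℕ) (hk : 0 < k) (E : Finset α) (p : α → P) (q : α → Q)
    (hp : ∀ e ∈ E, k ∣ #{f ∈ E | p f = p e}) (hq : ∀ e ∈ E, k ∣ #{f ∈ E | q f = q e}) :
    ∃ s : α → ℕ, (∀ e ∈ E, s e < k) ∧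
      (∀ x, ∀ i < k, k * #{f ∈ {f ∈ E | s f = i} | p f = x} = #{f ∈ E | p f = x}) ∧
      (∀ x, ∀ i < k, k * #{f ∈ {f ∈ E | s f = i} | q f = x} = #{f ∈ E | q f = x}) := by
  obtain ⟨g, hg⟩ := pi_blocks k hk E p hp
  obtain ⟨h, hh⟩ := pi_blocks k hk E q hq
  obtain ⟨c, h1, h2, h3⟩ := pi_konig (fun e => (p e, g e)) (fun e => (q e, h e)) k E hg hh
  exact ⟨c, h1, fun x i hi => pi_count k E p g c hg h1 h2 x i hi,
    fun x i hi => pi_count k E q h c hh h1 h3 x i hi⟩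

theorem pi_pair {V : Type*} [DecidableEq V] (X Y : Finset V) (a r : ℕ) (har : a ≤ r)
    (A B : Finset (V × V)) (hA : A ⊆ X ×ˢ Y) (hB : B ⊆ X ×ˢ Y)
    (hAX : ∀ x ∈ X, #{e ∈ A | e.1 = x} = a) (hBX : ∀ x ∈ X, #{e ∈ B | e.1 = x} = a)
    (hAY : ∀ y ∈ Y, #{e ∈ A | e.2 = y} = r) (hBY : ∀ y ∈ Y, #{e ∈ B | e.2 = y} = r) :
    ∃ cA cB : V × V → ℕ, (∀ e ∈ A, cA e < r) ∧ (∀ e ∈ B, cB e < r) ∧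
      (∀ e ∈ A, ∀ f ∈ A, e.1 = f.1 → cA e = cA f → e = f) ∧
      (∀ e ∈ A, ∀ f ∈ A, e.2 = f.2 → cA e = cA f → e = f) ∧
      (∀ e ∈ B, ∀ f ∈ B, e.1 = f.1 → cB e = cB f → e = f) ∧
      (∀ e ∈ B, ∀ f ∈ B, e.2 = f.2 → cB e = cB f → e = f) ∧
      ∀ x ∈ X, ({e ∈ A | e.1 = x} : Finset _).image cA = ({e ∈ B | e.1 = x} : Finset _).image cB := by
  let L : Finset (V × ℕ) := X ×ˢ Finset.range (r - a)
  have hL : ∀ x ∈ X, #{e ∈ L | e.1 = x} = r - a := by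
    intro x hx
    have : ({e ∈ L | e.1 = x} : Finset _) = {x} ×ˢ Finset.range (r - a) := by
      ext ⟨u, i⟩; simp only [L, Finset.mem_filter, Finset.mem_product, Finset.mem_singleton]
      constructor
      · rintro ⟨⟨_, h⟩, h'⟩; exact ⟨h', h⟩
      · rintro ⟨rfl, h⟩; exact ⟨⟨hx, h⟩, rfl⟩
    rw [this]; simp
  let E : Finset ((V × V) ⊕ ((V × V) ⊕ (V × ℕ))) := A.disjSum (B.disjSum L)
  let p : (V × V) ⊕ ((V × V) ⊕ (V × ℕ)) → V ⊕ V :=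
    Sum.elim (fun e => .inl e.1) (Sum.elim (fun e => .inr e.2) (fun e => .inl e.1))
  let q : (V × V) ⊕ ((V × V) ⊕ (V × ℕ)) → V ⊕ V :=
    Sum.elim (fun e => .inr e.2) (Sum.elim (fun e => .inl e.1) (fun e => .inl e.1))
  have p1 : ∀ x, ({e ∈ E | p e = .inl x} : Finset _) =
      ({e ∈ A | e.1 = x} : Finset _).disjSum ((∅ : Finset _).disjSum {e ∈ L | e.1 = x}) := by
    intro x; ext (e | e | e) <;> simp [E, p]
  have p2 : ∀ x, ({e ∈ E | p e = .inr x} : Finset _) =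
      (∅ : Finset _).disjSum (({e ∈ B | e.2 = x} : Finset _).disjSum (∅ : Finset _)) := by
    intro x; ext (e | e | e)
    · simp [E, p]
    · simp only [E, p, Finset.mem_filter, Finset.inl_mem_disjSum, Finset.inr_mem_disjSum,
        Sum.elim_inr, Sum.elim_inl, Sum.inr.injEq]
    · simp [E, p]
  have q1 : ∀ x, ({e ∈ E | q e = .inl x} : Finset _) =
      (∅ : Finset _).disjSum (({e ∈ B | e.1 = x} : Finset _).disjSum {e ∈ L | e.1 = x}) := by
    intro x; ext (e | e | e) <;> simp [E, q]
  have q2 : ∀ x, ({e ∈ E | q e = .inr x} : Finset _) =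
      ({e ∈ A | e.2 = x} : Finset _).disjSum (∅ : Finset _) := by
    intro x; ext (e | e | e) <;> simp [E, q]
  have cp1 : ∀ x ∈ X, #{e ∈ E | p e = .inl x} = r := by
    intro x hx; rw [p1]; simp only [Finset.card_disjSum, hAX x hx, hL x hx, Finset.card_empty]; omega
  have cp2 : ∀ x ∈ Y, #{e ∈ E | p e = .inr x} = r := by
    intro x hx; rw [p2]; simp only [Finset.card_disjSum, hBY x hx, Finset.card_empty]; omega
  have cq1 : ∀ x ∈ X, #{e ∈ E | q e = .inl x} = r := by
    intro x hx; rw [q1]; simp only [Finset.card_disjSum, hBX x hx, hL x hx, Finset.card_empty]; omega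
  have cq2 : ∀ x ∈ Y, #{e ∈ E | q e = .inr x} = r := by
    intro x hx; rw [q2]; simp only [Finset.card_disjSum, hAY x hx, Finset.card_empty]; omega
  have hAm : ∀ e ∈ A, e.1 ∈ X ∧ e.2 ∈ Y := fun e he => Finset.mem_product.1 (hA he)
  have hBm : ∀ e ∈ B, e.1 ∈ X ∧ e.2 ∈ Y := fun e he => Finset.mem_product.1 (hB he)
  have hLm : ∀ e ∈ L, e.1 ∈ X := fun e he => (Finset.mem_product.1 he).1
  obtain ⟨c, h1, h2, h3⟩ := pi_konig p q r E (by
      rintro (e | e | e) he <;> simp only [E, Finset.inl_mem_disjSum, Finset.inr_mem_disjSum] at he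
      · exact cp1 _ (hAm e he).1
      · exact cp2 _ (hBm e he).2
      · exact cp1 _ (hLm e he)) (by
      rintro (e | e | e) he <;> simp only [E, Finset.inl_mem_disjSum, Finset.inr_mem_disjSum] at he
      · exact cq2 _ (hAm e he).2
      · exact cq1 _ (hBm e he).1
      · exact cq1 _ (hLm e he))
  have mA : ∀ e ∈ A, Sum.inl e ∈ E := fun e he => by simpa [E] using he
  have mB : ∀ e ∈ B, Sum.inr (Sum.inl e) ∈ E := fun e he => by simpa [E] using he
  have mL : ∀ e ∈ L, Sum.inr (Sum.inr e) ∈ E := fun e he => by simpa [E] using he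
  have key : ∀ (w : (V × V) ⊕ ((V × V) ⊕ (V × ℕ)) → V ⊕ V) (x : V),
      (∀ e ∈ E, ∀ f ∈ E, w e = w f → c e = c f → e = f) → #{e ∈ E | w e = .inl x} = r →
      ({e ∈ E | w e = .inl x} : Finset _).image c = Finset.range r := by
    intro w x hw hcard
    apply Finset.eq_of_subset_of_card_le
    · intro j hj
      obtain ⟨f, hf, rfl⟩ := Finset.mem_image.1 hj
      exact Finset.mem_range.2 (h1 f (Finset.mem_filter.1 hf).1)
    · rw [Finset.card_image_of_injOn, hcard, Finset.card_range]
      intro f hf f' hf' h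
      simp only [Finset.coe_filter, Set.mem_ofPred_eq] at hf hf'
      exact hw f hf.1 f' hf'.1 (hf.2.trans hf'.2.symm) h
  refine ⟨fun e => c (.inl e), fun e => c (.inr (.inl e)), fun e he => h1 _ (mA e he),
    fun e he => h1 _ (mB e he), ?_, ?_, ?_, ?_, ?_⟩
  · intro e he f hf h h'
    exact Sum.inl_injective (h2 _ (mA e he) _ (mA f hf) (by simp [p, h]) h')
  · intro e he f hf h h'
    exact Sum.inl_injective (h3 _ (mA e he) _ (mA f hf) (by simp [q, h]) h')
  · intro e he f hf h h'
    exact Sum.inl_injective (Sum.inr_injective (h3 _ (mB e he) _ (mB f hf) (by simp [q, h]) h'))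
  · intro e he f hf h h'
    exact Sum.inl_injective (Sum.inr_injective (h2 _ (mB e he) _ (mB f hf) (by simp [p, h]) h'))
  · intro x hx
    have kp := key p x h2 (cp1 x hx)
    have kq := key q x h3 (cq1 x hx)
    ext n
    simp only [Finset.mem_image, Finset.mem_filter]
    constructor
    · rintro ⟨e, ⟨he, hex⟩, rfl⟩
      have : c (.inl e) ∈ Finset.range r := Finset.mem_range.2 (h1 _ (mA e he))
      rw [← kq, q1] at this
      obtain ⟨f, hf, hfc⟩ := Finset.mem_image.1 this
      rcases f with f | f | f
      · simp at hf
      · simp only [Finset.inl_mem_disjSum, Finset.inr_mem_disjSum, Finset.mem_filter] at hf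
        exact ⟨f, hf, hfc⟩
      · simp only [Finset.inr_mem_disjSum, Finset.mem_filter] at hf
        have := h2 _ (mL f hf.1) _ (mA e he) (by simp [p, hf.2, hex]) hfc
        simp at this
    · rintro ⟨e, ⟨he, hex⟩, rfl⟩
      have : c (.inr (.inl e)) ∈ Finset.range r := Finset.mem_range.2 (h1 _ (mB e he))
      rw [← kp, p1] at this
      obtain ⟨f, hf, hfc⟩ := Finset.mem_image.1 this
      rcases f with f | f | f
      · simp only [Finset.inl_mem_disjSum, Finset.mem_filter] at hf
        exact ⟨f, hf, hfc⟩
      · simp at hf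
      · simp only [Finset.inr_mem_disjSum, Finset.mem_filter] at hf
        have := h3 _ (mL f hf.1) _ (mB e he) (by simp [q, hf.2, hex]) hfc
        simp at this

theorem pi_coloring {V : Type*} [DecidableEq V] (X Y : Finset V) (a r : ℕ) (har : a ≤ r)
    (E : Finset (V × V)) (hE : E ⊆ X ×ˢ Y)
    (hX : ∀ x ∈ X, #{e ∈ E | e.1 = x} = 3 * a) (hY : ∀ y ∈ Y, #{e ∈ E | e.2 = y} = 3 * r) :
    ∃ d : V × V → ℕ, (∀ e ∈ E, ∀ f ∈ E, e.1 = f.1 → d e = d f → e = f) ∧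
      (∀ e ∈ E, ∀ f ∈ E, e.2 = f.2 → d e = d f → e = f) ∧
      (∀ y ∈ Y, ({e ∈ E | e.2 = y} : Finset _).image d = Finset.range (3 * r)) ∧
      ∃ F : Finset ℕ × Finset ℕ → Finset ℕ, ∀ x ∈ X,
        ∃ z ∈ (Finset.powersetCard a (Finset.range r)) ×ˢ (Finset.powersetCard a (Finset.range r)),
          ({e ∈ E | e.1 = x} : Finset _).image d = F z := by
  have hEm : ∀ e ∈ E, e.1 ∈ X ∧ e.2 ∈ Y := fun e he => Finset.mem_product.1 (hE he)
  obtain ⟨s, hs, hsX, hsY⟩ := pi_split 3 (by norm_num) E Prod.fst Prod.snd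
    (fun e he => by rw [hX _ (hEm e he).1]; exact dvd_mul_right _ _)
    (fun e he => by rw [hY _ (hEm e he).2]; exact dvd_mul_right _ _)
  have hiX : ∀ i < 3, ∀ x ∈ X, #{e ∈ {f ∈ E | s f = i} | e.1 = x} = a := by
    intro i hi x hx
    have := hsX x i hi
    rw [hX x hx] at this; omega
  have hiY : ∀ i < 3, ∀ x ∈ Y, #{e ∈ {f ∈ E | s f = i} | e.2 = x} = r := by
    intro i hi x hx
    have := hsY x i hi
    rw [hY x hx] at this; omega
  have hiE : ∀ i, ({f ∈ E | s f = i} : Finset _) ⊆ X ×ˢ Y :=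
    fun i => (Finset.filter_subset _ _).trans hE
  obtain ⟨cA, cB, A1, B1, A2, A3, B2, B3, hAB⟩ := pi_pair X Y a r har _ _ (hiE 0) (hiE 1)
    (hiX 0 (by norm_num)) (hiX 1 (by norm_num)) (hiY 0 (by norm_num)) (hiY 1 (by norm_num))
  obtain ⟨cC, _, C1, _, C2, C3, _, _, _⟩ := pi_pair X Y a r har _ _ (hiE 2) (hiE 2)
    (hiX 2 (by norm_num)) (hiX 2 (by norm_num)) (hiY 2 (by norm_num)) (hiY 2 (by norm_num))
  simp only [Finset.mem_filter, and_imp] at A1 A2 A3 B1 B2 B3 C1 C2 C3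
  obtain ⟨cc, hcc⟩ : ∃ cc : V × V → ℕ,
      cc = fun e => if s e = 0 then cA e else if s e = 1 then cB e else cC e := ⟨_, rfl⟩
  have cc0 : ∀ e, s e = 0 → cc e = cA e := by intro e h; simp [hcc, h]
  have cc1 : ∀ e, s e = 1 → cc e = cB e := by intro e h; simp [hcc, h]
  have cc2 : ∀ e, s e = 2 → cc e = cC e := by intro e h; simp [hcc, h]
  have s3 : ∀ e ∈ E, s e = 0 ∨ s e = 1 ∨ s e = 2 := by
    intro e he; have := hs e he; omega
  have ccr : ∀ e ∈ E, cc e < r := by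
    intro e he
    rcases s3 e he with h | h | h
    · rw [cc0 e h]; exact A1 e he h
    · rw [cc1 e h]; exact B1 e he h
    · rw [cc2 e h]; exact C1 e he h
  have I1 : ∀ e ∈ E, ∀ f ∈ E, e.1 = f.1 → 3 * cc e + s e = 3 * cc f + s f → e = f := by
    intro e he f hf h h'
    have h1 := hs e he
    have h2 := hs f hf
    have h3 : s e = s f := by omega
    have h4 : cc e = cc f := by omega
    rcases s3 e he with h5 | h5 | h5
    · rw [cc0 e h5, cc0 f (by omega)] at h4; exact A2 e he h5 f hf (by omega) h h4
    · rw [cc1 e h5, cc1 f (by omega)] at h4; exact B2 e he h5 f hf (by omega) h h4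
    · rw [cc2 e h5, cc2 f (by omega)] at h4; exact C2 e he h5 f hf (by omega) h h4
  have I2 : ∀ e ∈ E, ∀ f ∈ E, e.2 = f.2 → 3 * cc e + s e = 3 * cc f + s f → e = f := by
    intro e he f hf h h'
    have h1 := hs e he
    have h2 := hs f hf
    have h3 : s e = s f := by omega
    have h4 : cc e = cc f := by omega
    rcases s3 e he with h5 | h5 | h5
    · rw [cc0 e h5, cc0 f (by omega)] at h4; exact A3 e he h5 f hf (by omega) h h4
    · rw [cc1 e h5, cc1 f (by omega)] at h4; exact B3 e he h5 f hf (by omega) h h4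
    · rw [cc2 e h5, cc2 f (by omega)] at h4; exact C3 e he h5 f hf (by omega) h h4
  refine ⟨fun e => 3 * cc e + s e, I1, I2, ?_, 
    fun z => z.1.image (fun i => 3 * i) ∪ z.1.image (fun i => 3 * i + 1) ∪
      z.2.image (fun i => 3 * i + 2), ?_⟩
  · intro y hy
    apply Finset.eq_of_subset_of_card_le
    · intro j hj
      obtain ⟨f, hf, rfl⟩ := Finset.mem_image.1 hj
      have hf := (Finset.mem_filter.1 hf).1
      have := ccr f hf
      have := hs f hf
      rw [Finset.mem_range]; omega
    · rw [Finset.card_image_of_injOn, hY y hy, Finset.card_range]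
      intro f hf f' hf' h
      simp only [Finset.coe_filter, Set.mem_ofPred_eq] at hf hf'
      exact I2 f hf.1 f' hf'.1 (hf.2.trans hf'.2.symm) h
  · intro x hx
    refine ⟨(({e ∈ {f ∈ E | s f = 0} | e.1 = x} : Finset _).image cA,
      ({e ∈ {f ∈ E | s f = 2} | e.1 = x} : Finset _).image cC), ?_, ?_⟩
    · rw [Finset.mem_product]
      constructor <;> rw [Finset.mem_powersetCard]
      · refine ⟨?_, ?_⟩
        · intro j hj
          obtain ⟨f, hf, rfl⟩ := Finset.mem_image.1 hj
          simp only [Finset.mem_filter] at hf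
          exact Finset.mem_range.2 (A1 f hf.1.1 hf.1.2)
        · dsimp only
          rw [Finset.card_image_of_injOn, hiX 0 (by norm_num) x hx]
          intro f hf f' hf' h
          simp only [Finset.coe_filter, Set.mem_ofPred_eq, Finset.mem_filter] at hf hf'
          exact A2 f hf.1.1 hf.1.2 f' hf'.1.1 hf'.1.2 (hf.2.trans hf'.2.symm) h
      · refine ⟨?_, ?_⟩
        · intro j hj
          obtain ⟨f, hf, rfl⟩ := Finset.mem_image.1 hj
          simp only [Finset.mem_filter] at hf
          exact Finset.mem_range.2 (C1 f hf.1.1 hf.1.2)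
        · dsimp only
          rw [Finset.card_image_of_injOn, hiX 2 (by norm_num) x hx]
          intro f hf f' hf' h
          simp only [Finset.coe_filter, Set.mem_ofPred_eq, Finset.mem_filter] at hf hf'
          exact C2 f hf.1.1 hf.1.2 f' hf'.1.1 hf'.1.2 (hf.2.trans hf'.2.symm) h
    · have hx' := Finset.ext_iff.1 (hAB x hx)
      simp only [Finset.mem_image, Finset.mem_filter] at hx'
      ext n
      simp only [Finset.mem_image, Finset.mem_filter, Finset.mem_union]
      constructor
      · rintro ⟨e, ⟨he, hex⟩, rfl⟩
        rcases s3 e he with h | h | h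
        · exact Or.inl (Or.inl ⟨cA e, ⟨e, ⟨⟨he, h⟩, hex⟩, rfl⟩, by rw [cc0 e h, h]; rfl⟩)
        · exact Or.inl (Or.inr ⟨cB e, (hx' _).2 ⟨e, ⟨⟨he, h⟩, hex⟩, rfl⟩, by rw [cc1 e h, h]⟩)
        · exact Or.inr ⟨cC e, ⟨e, ⟨⟨he, h⟩, hex⟩, rfl⟩, by rw [cc2 e h, h]⟩
      · rintro ((⟨i, hi, rfl⟩ | ⟨i, hi, rfl⟩) | ⟨i, hi, rfl⟩)
        · obtain ⟨e, ⟨⟨he, h⟩, hex⟩, rfl⟩ := hi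
          exact ⟨e, ⟨he, hex⟩, by rw [cc0 e h, h]; rfl⟩
        · obtain ⟨e, ⟨⟨he, h⟩, hex⟩, rfl⟩ := (hx' _).1 hi
          exact ⟨e, ⟨he, hex⟩, by rw [cc1 e h, h]⟩
        · obtain ⟨e, ⟨⟨he, h⟩, hex⟩, rfl⟩ := hi
          exact ⟨e, ⟨he, hex⟩, by rw [cc2 e h, h]⟩

theorem pi_upper {V : Type*} [Fintype V] (G : SimpleGraph V) [DecidableRel G.Adj] (a r : ℕ)
    (har : a ≤ r) (h : IsBiregular G (3 * a) (3 * r)) :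
    ∃ c : Sym2 V → ℕ, IsProperEdgeColoring G c ∧
      (Set.range (palette G c)).ncard ≤ (r.choose a) ^ 2 + 1 := by
  classical
  obtain ⟨X, Y, -, -, hdis, hcov, hadj, hdX, hdY⟩ := h
  let E : Finset (V × V) := {e ∈ X ×ˢ Y | G.Adj e.1 e.2}
  have hnXY : ∀ v, v ∈ X → v ∉ Y := fun v hv => Finset.disjoint_left.1 hdis hv
  have hEX : ∀ x ∈ X, ({e ∈ E | e.1 = x} : Finset _) = (G.neighborFinset x).image (fun y => (x, y)) := by
    intro x hx
    ext ⟨u, v⟩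
    simp only [E, Finset.mem_filter, Finset.mem_product, Finset.mem_image, mem_neighborFinset,
      Prod.mk.injEq]
    constructor
    · rintro ⟨⟨_, h2⟩, rfl⟩; exact ⟨v, h2, rfl, rfl⟩
    · rintro ⟨w, h2, rfl, rfl⟩
      refine ⟨⟨⟨hx, ?_⟩, h2⟩, rfl⟩
      rcases hadj _ _ h2 with h | h
      · exact h.2
      · exact absurd h.1 (hnXY _ hx)
  have hEY : ∀ y ∈ Y, ({e ∈ E | e.2 = y} : Finset _) = (G.neighborFinset y).image (fun x => (x, y)) := by
    intro y hy
    ext ⟨u, v⟩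
    simp only [E, Finset.mem_filter, Finset.mem_product, Finset.mem_image, mem_neighborFinset,
      Prod.mk.injEq]
    constructor
    · rintro ⟨⟨_, h2⟩, rfl⟩; exact ⟨u, h2.symm, rfl, rfl⟩
    · rintro ⟨w, h2, rfl, rfl⟩
      refine ⟨⟨⟨?_, hy⟩, h2.symm⟩, rfl⟩
      rcases hadj _ _ h2 with h | h
      · exact absurd hy (hnXY _ h.1)
      · exact h.2
  obtain ⟨d, d1, d2, dY, F, dX⟩ := pi_coloring X Y a r har E (Finset.filter_subset _ _)
    (fun x hx => by
      rw [hEX x hx, Finset.card_image_of_injective _ (fun u v h => (Prod.mk.inj h).2),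
        card_neighborFinset_eq_degree, hdX x hx])
    (fun y hy => by
      rw [hEY y hy, Finset.card_image_of_injective _ (fun u v h => (Prod.mk.inj h).1),
        card_neighborFinset_eq_degree, hdY y hy])
  let c : Sym2 V → ℕ := Sym2.lift ⟨fun u v => (if u ∈ X ∧ v ∈ Y then d (u, v) else 0) +
    (if v ∈ X ∧ u ∈ Y then d (v, u) else 0), fun u v => add_comm _ _⟩
  have hc : ∀ u v, u ∈ X → v ∈ Y → c s(u, v) = d (u, v) := by
    intro u v hu hv
    simp [c, hu, hv, hnXY u hu]
  -- every edge has a representative in E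
  have hrep : ∀ e ∈ G.edgeSet, ∃ x y, (x, y) ∈ E ∧ e = s(x, y) ∧ c e = d (x, y) := by
    intro e
    induction e using Sym2.ind with
    | _ u v =>
      intro he
      rw [mem_edgeSet] at he
      rcases hadj _ _ he with ⟨h1, h2⟩ | ⟨h1, h2⟩
      · exact ⟨u, v, by simp [E, h1, h2, he], rfl, hc u v h1 h2⟩
      · exact ⟨v, u, by simp [E, h1, h2, he.symm], Sym2.eq_swap, by rw [Sym2.eq_swap]; exact hc v u h2 h1⟩
  have hEm : ∀ e ∈ E, e.1 ∈ X ∧ e.2 ∈ Y ∧ G.Adj e.1 e.2 := by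
    intro e he
    simp only [E, Finset.mem_filter, Finset.mem_product] at he
    exact ⟨he.1.1, he.1.2, he.2⟩
  have palX : ∀ x ∈ X, palette G c x = ↑(({e ∈ E | e.1 = x} : Finset _).image d) := by
    intro x hx
    ext n
    simp only [palette, Set.mem_ofPred_eq, Finset.mem_coe, Finset.mem_image, Finset.mem_filter]
    constructor
    · rintro ⟨e, he, hxe, rfl⟩
      obtain ⟨u, v, huv, rfl, hcd⟩ := hrep e he
      have := hEm _ huv
      rcases Sym2.mem_iff.1 hxe with rfl | rfl
      · exact ⟨_, ⟨huv, rfl⟩, hcd.symm⟩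
      · exact absurd this.2.1 (hnXY _ hx)
    · rintro ⟨⟨u, v⟩, ⟨huv, rfl⟩, rfl⟩
      have := hEm _ huv
      exact ⟨s(u, v), this.2.2, Sym2.mem_mk_left _ _, hc _ _ this.1 this.2.1⟩
  have palY : ∀ y ∈ Y, palette G c y = ↑(({e ∈ E | e.2 = y} : Finset _).image d) := by
    intro y hy
    ext n
    simp only [palette, Set.mem_ofPred_eq, Finset.mem_coe, Finset.mem_image, Finset.mem_filter]
    constructor
    · rintro ⟨e, he, hxe, rfl⟩
      obtain ⟨u, v, huv, rfl, hcd⟩ := hrep e he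
      have := hEm _ huv
      rcases Sym2.mem_iff.1 hxe with rfl | rfl
      · exact absurd hy (hnXY _ this.1)
      · exact ⟨_, ⟨huv, rfl⟩, hcd.symm⟩
    · rintro ⟨⟨u, v⟩, ⟨huv, rfl⟩, rfl⟩
      have := hEm _ huv
      exact ⟨s(u, v), this.2.2, Sym2.mem_mk_right _ _, hc _ _ this.1 this.2.1⟩
  refine ⟨c, ?_, ?_⟩
  · rintro e₁ he₁ e₂ he₂ hne ⟨v, hv1, hv2⟩ hcc
    obtain ⟨x, y, hxy, rfl, h1⟩ := hrep e₁ he₁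
    obtain ⟨x', y', hxy', rfl, h2⟩ := hrep e₂ he₂
    have m1 := hEm _ hxy
    have m2 := hEm _ hxy'
    rw [h1, h2] at hcc
    apply hne
    have : (x, y) = (x', y') := by
      rcases Sym2.mem_iff.1 hv1 with rfl | rfl <;> rcases Sym2.mem_iff.1 hv2 with rfl | rfl
      · exact d1 _ hxy _ hxy' rfl hcc
      · exact absurd m2.2.1 (hnXY _ m1.1)
      · exact absurd m1.2.1 (hnXY _ m2.1)
      · exact d2 _ hxy _ hxy' rfl hcc
    rw [Prod.mk.injEq] at this
    rw [this.1, this.2]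
  · let Z := (Finset.powersetCard a (Finset.range r)) ×ˢ (Finset.powersetCard a (Finset.range r))
    let W : Finset (Set ℕ) := insert (↑(Finset.range (3 * r))) (Z.image (fun z => (↑(F z) : Set ℕ)))
    have hW : #W ≤ (r.choose a) ^ 2 + 1 := by
      refine (Finset.card_insert_le _ _).trans (Nat.add_le_add_right (Finset.card_image_le.trans ?_) 1)
      simp [Z, sq]
    refine le_trans ?_ hW
    rw [← Set.ncard_coe_finset]
    apply Set.ncard_le_ncard _ W.finite_toSet
    rintro _ ⟨v, rfl⟩
    rw [Finset.mem_coe, Finset.mem_insert]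
    rcases hcov v with hv | hv
    · right
      obtain ⟨z, hz, hzF⟩ := dX v hv
      rw [palX v hv, hzF]
      exact Finset.mem_image_of_mem _ hz
    · left
      rw [palY v hv, dY v hv]

theorem pi_lower {V : Type*} [Fintype V] (G : SimpleGraph V) [DecidableRel G.Adj] (r : ℕ)
    (hr : 2 ≤ r) (h : IsBiregular G 3 (3 * r)) (c : Sym2 V → ℕ) (hc : IsProperEdgeColoring G c) :
    r + 1 ≤ (Set.range (palette G c)).ncard := by
  classical
  obtain ⟨X, Y, -, ⟨y, hy⟩, hdis, hcov, hadj, hdX, hdY⟩ := h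
  let P : V → Finset ℕ := fun v => (G.neighborFinset v).image (fun w => c s(v, w))
  have hP : ∀ v, palette G c v = ↑(P v) := by
    intro v
    ext n
    simp only [palette, Set.mem_ofPred_eq, P, Finset.mem_coe, Finset.mem_image, mem_neighborFinset]
    constructor
    · rintro ⟨e, he, hv, rfl⟩
      obtain ⟨w, rfl⟩ := hv
      exact ⟨w, he, rfl⟩
    · rintro ⟨w, hw, rfl⟩
      exact ⟨s(v, w), hw, Sym2.mem_mk_left _ _, rfl⟩
  have hrange : Set.range (palette G c) = ((↑) : Finset ℕ → Set ℕ) '' (↑(Finset.univ.image P)) := by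
    ext S; simp [hP]
  rw [hrange, Set.ncard_image_of_injective _ Finset.coe_injective, Set.ncard_coe_finset]
  have hPX : ∀ x ∈ X, #(P x) ≤ 3 := fun x hx => by
    rw [← hdX x hx, ← card_neighborFinset_eq_degree]; exact Finset.card_image_le
  have hPY : #(P y) = 3 * r := by
    rw [← hdY y hy, ← card_neighborFinset_eq_degree]
    apply Finset.card_image_of_injOn
    intro u hu v hv huv
    simp only [Finset.mem_coe, mem_neighborFinset] at hu hv
    by_contra hne
    refine hc s(y, u) hu s(y, v) hv ?_ ⟨y, Sym2.mem_mk_left _ _, Sym2.mem_mk_left _ _⟩ huv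
    intro h; exact hne (Sym2.congr_right.1 h)
  have hsub : P y ⊆ (X.image P).biUnion id := by
    intro n hn
    simp only [P, Finset.mem_image, mem_neighborFinset] at hn
    obtain ⟨w, hw, rfl⟩ := hn
    rw [Finset.mem_biUnion]
    refine ⟨P w, Finset.mem_image_of_mem _ ?_, ?_⟩
    · rcases hadj _ _ hw with h | h
      · exact absurd hy (Finset.disjoint_left.1 hdis h.1)
      · exact h.2
    · simp only [id, P, Finset.mem_image, mem_neighborFinset]
      exact ⟨y, hw.symm, by rw [Sym2.eq_swap]⟩
  have h1 := (Finset.card_le_card hsub).trans (Finset.card_biUnion_le_card_mul _ _ 3 (by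
    intro S hS
    obtain ⟨x, hx, rfl⟩ := Finset.mem_image.1 hS
    exact hPX x hx))
  have h2 : P y ∉ X.image P := by
    intro hmem
    obtain ⟨x, hx, hxy⟩ := Finset.mem_image.1 hmem
    have := hPX x hx
    rw [hxy, hPY] at this; omega
  have h3 : insert (P y) (X.image P) ⊆ Finset.univ.image P := by
    rw [Finset.insert_subset_iff]
    exact ⟨Finset.mem_image_of_mem _ (Finset.mem_univ _), Finset.image_subset_image (Finset.subset_univ _)⟩
  have h4 := Finset.card_le_card h3
  rw [Finset.card_insert_of_notMem h2] at h4
  omega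

/-- (i) If `G` is `(3,3r)`-biregular (`r ≥ 2`), then `r + 1 ≤ š(G) ≤ r² + 1`;
(ii) if `G` is `(3r−3,3r)`-biregular (`r ≥ 2`), then `š(G) ≤ r² + 1`. -/
theorem palette_index_three_biregular {V : Type*} [Fintype V]
    (G : SimpleGraph V) [DecidableRel G.Adj] (r : ℕ) (hr : 2 ≤ r) :
    (IsBiregular G 3 (3 * r) →
      r + 1 ≤ paletteIndex G ∧ paletteIndex G ≤ r ^ 2 + 1) ∧
    (IsBiregular G (3 * r - 3) (3 * r) → paletteIndex G ≤ r ^ 2 + 1) := by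
  constructor
  · intro h
    obtain ⟨c, hc, hle⟩ := pi_upper G 1 r (by omega) h
    rw [Nat.choose_one_right] at hle
    constructor
    · refine le_csInf (s := {k | ∃ c : Sym2 V → ℕ, IsProperEdgeColoring G c ∧
        (Set.range (palette G c)).ncard = k}) ⟨_, c, hc, rfl⟩ ?_
      rintro k ⟨c', hc', rfl⟩
      exact pi_lower G r hr h c' hc'
    · exact le_trans (Nat.sInf_le (s := {k | ∃ c : Sym2 V → ℕ, IsProperEdgeColoring G c ∧
        (Set.range (palette G c)).ncard = k}) ⟨c, hc, rfl⟩) hle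
  · intro h
    have e : 3 * r - 3 = 3 * (r - 1) := by omega
    rw [e] at h
    obtain ⟨c, hc, hle⟩ := pi_upper G (r - 1) r (by omega) h
    have e2 : r.choose (r - 1) = r := by
      rw [Nat.choose_symm_of_eq_add (b := 1) (by omega), Nat.choose_one_right]
    rw [e2] at hle
    exact le_trans (Nat.sInf_le (s := {k | ∃ c : Sym2 V → ℕ, IsProperEdgeColoring G c ∧
        (Set.range (palette G c)).ncard = k}) ⟨c, hc, rfl⟩) hle
end
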